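/- Let p be a prime, q a power of p. Let w ≥ 25 be a real number and b, c, d ∈ F_q[T] distinct polynomials of degree at least one. Let 0 < η < √w/4 and put m_i := ⌊(⌊w^{i+1}⌋ − ⌊w^i − 1⌋)/⌊η w^i⌋⌋ for all i ≥ 1. Define a_{n,w,η} = c if n = ⌊w^i⌋ for some integer i ≥ 0; a_{n,w,η} = d if n ≠ ⌊w^i⌋ for all integers i ≥ 0 and n = ⌊w^j⌋ + m⌊η w^j⌋ for some integers 1 ≤ m ≤ m_j and j ≥ 1; and a_{n,w,η} = b otherwise. Set ξ_{w,η} := [0, a_{1,w,η}, a_{2,w,η}, …] ∈ F_q((T^{-1})). Then w_2*(ξ_{w,η}) = (2w − 2 − η)/(2 + η) and w_2(ξ_{w,η}) = (2w − η)/(2 + η); in particular w_2(ξ_{w,η}) − w_2*(ξ_{w,η}) = 2/(2 + η). -/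

import Mathlib

open Polynomial Filter
open scoped ENNReal

noncomputable section

namespace Ooto

variable (Fq : Type) [Field Fq] [Fintype Fq]

/-- `F_q((T⁻¹))`, realized as formal Laurent series in the variable `X = T⁻¹`. -/
abbrev K := LaurentSeries Fq

/-- The element `T = X⁻¹` of `F_q((T⁻¹))`. -/
def TT : K Fq := HahnSeries.single (-1 : ℤ) (1 : Fq)

/-- The natural embedding of `F_q[T]` into `F_q((T⁻¹))`, sending `T` to `T`. -/
def polyToK : Polynomial Fq →+* K Fq := Polynomial.eval₂RingHom HahnSeries.C (TT Fq)

open Classical in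
/-- The absolute value on `F_q((T⁻¹))`: `|0| = 0` and `|ξ| = q^{-N}` where `N` is the order
of `ξ` as a series in `T⁻¹`. -/
def kabs (f : K Fq) : ℝ := if f = 0 then 0 else (Fintype.card Fq : ℝ) ^ (-f.order)

/-- A fixed algebraic closure of `F_q((T⁻¹))`. -/
abbrev L := AlgebraicClosure (K Fq)

def toL : K Fq →+* L Fq := algebraMap (K Fq) (L Fq)

def φ : Polynomial Fq →+* L Fq := (toL Fq).comp (polyToK Fq)

/-- Evaluation of `P ∈ (F_q[T])[X]` at `ξ ∈ F_q((T⁻¹))`. -/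
def evalK (P : Polynomial (Polynomial Fq)) (ξ : K Fq) : K Fq :=
  Polynomial.eval₂ (polyToK Fq) ξ P

/-- Evaluation of `P ∈ (F_q[T])[X]` at a point of the algebraic closure. -/
def evalL (P : Polynomial (Polynomial Fq)) (α : L Fq) : L Fq :=
  Polynomial.eval₂ (φ Fq) α P

/-- Height of a polynomial over `F_q[T]`: the maximum of the absolute values of its
coefficients. -/
def Hpoly (P : Polynomial (Polynomial Fq)) : ℝ := ⨆ i : ℕ, kabs Fq (polyToK Fq (P.coeff i))

/-- `P` is the minimal polynomial of `α`: a non-constant irreducible primitive polynomial in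
`(F_q[T])[X]` whose leading coefficient is monic in `T`, vanishing at `α`. -/
def IsMinPolyOf (P : Polynomial (Polynomial Fq)) (α : L Fq) : Prop :=
  0 < P.natDegree ∧ Irreducible P ∧ P.IsPrimitive ∧ (P.leadingCoeff).Monic ∧ evalL Fq P α = 0

/-- `α` is algebraic over `F_q(T)`. -/
def IsAlgElem (α : L Fq) : Prop := ∃ P, IsMinPolyOf Fq P α

open Classical in
/-- The minimal polynomial of an algebraic element (junk value `0` otherwise). -/
def minPolyPrim (α : L Fq) : Polynomial (Polynomial Fq) :=
  if h : IsAlgElem Fq α then h.choose else 0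

/-- Degree of an algebraic element. -/
def degAlg (α : L Fq) : ℕ := (minPolyPrim Fq α).natDegree

/-- Height of an algebraic element. -/
def heightAlg (α : L Fq) : ℝ := Hpoly Fq (minPolyPrim Fq α)

/-- Inseparable degree of a polynomial `P ∈ (F_q[T])[X]`: the largest power `f = p^j` of the
characteristic such that `P(X) = R(X^f)` for some `R`. -/
def insepDeg (P : Polynomial (Polynomial Fq)) : ℕ :=
  (ringChar Fq) ^ sSup {j : ℕ | ∃ R : Polynomial (Polynomial Fq),
    P = R.comp (Polynomial.X ^ (ringChar Fq) ^ j)}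

/-- Inseparable degree of an algebraic element. -/
def insepAlg (α : L Fq) : ℕ := insepDeg Fq (minPolyPrim Fq α)

/-- `α'` is the Galois conjugate of the quadratic element `α` (equal to `α` itself in the
inseparable case): the minimal polynomial of `α` factors as `A(X - α)(X - α')`. -/
def IsConjOf (α' α : L Fq) : Prop :=
  (minPolyPrim Fq α).natDegree = 2 ∧
  (minPolyPrim Fq α).map (φ Fq) =
    Polynomial.C (φ Fq (minPolyPrim Fq α).leadingCoeff) *
      (Polynomial.X - Polynomial.C α) * (Polynomial.X - Polynomial.C α')

/-- `v` is an absolute value on the algebraic closure of `F_q((T⁻¹))` extending `kabs`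
(such an extension exists and is unique). -/
structure IsAbsExt (v : L Fq → ℝ) : Prop where
  eq_zero_iff : ∀ x, v x = 0 ↔ x = 0
  map_mul : ∀ x y, v (x * y) = v x * v y
  add_le : ∀ x y, v (x + y) ≤ max (v x) (v y)
  nonneg : ∀ x, 0 ≤ v x
  extends_kabs : ∀ f : K Fq, v (toL Fq f) = kabs Fq f

/-- The exponent `w_n(ξ)`: the supremum of the real numbers `w` such that
`0 < |P(ξ)| ≤ H(P)^{-w}` for infinitely many `P ∈ (F_q[T])[X]` of degree at most `n`. -/
def wExp (n : ℕ) (ξ : K Fq) : EReal :=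
  sSup {x : EReal | ∃ w : ℝ, x = (w : EReal) ∧
    {P : Polynomial (Polynomial Fq) | P.natDegree ≤ n ∧ 0 < kabs Fq (evalK Fq P ξ) ∧
      kabs Fq (evalK Fq P ξ) ≤ Hpoly Fq P ^ (-w)}.Infinite}

/-- The exponent `w_n^*(ξ)`: the supremum of the real numbers `w` such that
`0 < |ξ - α| ≤ H(α)^{-w-1}` for infinitely many algebraic `α` of degree at most `n`. -/
def wStarExp (v : L Fq → ℝ) (n : ℕ) (ξ : K Fq) : EReal :=
  sSup {x : EReal | ∃ w : ℝ, x = (w : EReal) ∧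
    {α : L Fq | IsAlgElem Fq α ∧ degAlg Fq α ≤ n ∧ 0 < v (toL Fq ξ - α) ∧
      v (toL Fq ξ - α) ≤ heightAlg Fq α ^ (-w - 1)}.Infinite}

/-- `pSeq a n = p_{n-1}`, the numerators of the convergents of `[a 0; a 1, a 2, …]`
(with `p_{-1} = 1`). -/
def pSeq (a : ℕ → Polynomial Fq) : ℕ → Polynomial Fq
  | 0 => 1
  | 1 => a 0
  | (n+2) => a (n+1) * pSeq a (n+1) + pSeq a n

/-- `qSeq a n = q_{n-1}`, the denominators of the convergents of `[a 0; a 1, a 2, …]`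
(with `q_{-1} = 0`). -/
def qSeq (a : ℕ → Polynomial Fq) : ℕ → Polynomial Fq
  | 0 => 0
  | 1 => 1
  | (n+2) => a (n+1) * qSeq a (n+1) + qSeq a n

/-- `ξ` has continued fraction expansion `[a 0; a 1, a 2, …]`: each partial quotient `a n`
(`n ≥ 1`) has degree at least one and `|ξ - p_n/q_n| = |q_n|⁻¹|q_{n+1}|⁻¹` for all `n ≥ 0`. -/
def IsCFOf (ξ : K Fq) (a : ℕ → Polynomial Fq) : Prop :=
  (∀ n, 1 ≤ n → 1 ≤ (a n).natDegree) ∧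
  ∀ n : ℕ,
    kabs Fq (ξ - polyToK Fq (pSeq Fq a (n+1)) / polyToK Fq (qSeq Fq a (n+1))) =
      (kabs Fq (polyToK Fq (qSeq Fq a (n+1))) * kabs Fq (polyToK Fq (qSeq Fq a (n+2))))⁻¹

/-- The sequence of partial quotients of `[0; b 0, b 1, b 2, …]`. -/
def cfA (b : ℕ → Polynomial Fq) : ℕ → Polynomial Fq := fun n => if n = 0 then 0 else b (n - 1)

/-- `qden b n` is the denominator `q_n` of the `n`-th convergent of `[0; b 0, b 1, …]`. -/
def qden (b : ℕ → Polynomial Fq) (n : ℕ) : Polynomial Fq := qSeq Fq (cfA Fq b) (n + 1)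

/-- `V^w` for a finite word `V` and a real `w ≥ 0`: `⌊w⌋` copies of `V` followed by the prefix
of `V` of length `⌈(w - ⌊w⌋)|V|⌉`. -/
def wordPow {A : Type*} (V : List A) (w : ℝ) : List A :=
  (List.replicate ⌊w⌋₊ V).flatten ++ V.take ⌈(w - ⌊w⌋₊) * V.length⌉₊

/-- The finite word `l` is a prefix of the infinite word `b`. -/
def IsPrefixOfSeq {A : Type*} (l : List A) (b : ℕ → A) : Prop :=
  ∀ (i : ℕ) (h : i < l.length), l.get ⟨i, h⟩ = b i

/-- Condition `(*)_ρ` for an infinite word. -/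
def SatisfiesCond {A : Type*} (b : ℕ → A) (ρ : ℝ) : Prop :=
  ∃ (U V : ℕ → List A) (w : ℕ → ℝ),
    (∀ n, V n ≠ []) ∧ (∀ n, 0 ≤ w n) ∧
    (∀ n, IsPrefixOfSeq (U n ++ wordPow (V n) (w n)) b) ∧
    (∀ n, ρ * (((U n).length + (V n).length : ℕ) : ℝ) ≤
      (((U n).length + (wordPow (V n) (w n)).length : ℕ) : ℝ)) ∧
    StrictMono fun n => (wordPow (V n) (w n)).length

/-- The Diophantine exponent of an infinite word: the supremum of the `ρ` such that the word
satisfies Condition `(*)_ρ`. -/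
def dioExp {A : Type*} (b : ℕ → A) : EReal :=
  sSup {x : EReal | ∃ ρ : ℝ, x = (ρ : EReal) ∧ SatisfiesCond b ρ}

/-- The complexity function: the number of distinct blocks of `n` consecutive letters. -/
def complexity {A : Type*} (b : ℕ → A) (n : ℕ) : ℕ∞ :=
  {w : Fin n → A | ∃ i : ℕ, ∀ k : Fin n, w k = b (i + k)}.encard

/-- The infinite word `b` is ultimately periodic. -/
def UltimatelyPeriodic {A : Type*} (b : ℕ → A) : Prop :=
  ∃ N T : ℕ, 0 < T ∧ ∀ n, N ≤ n → b (n + T) = b n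


set_option linter.unusedSectionVars false

/-- A nonarchimedean absolute value on a field. -/
structure NA {F : Type} [Field F] (u : F → ℝ) : Prop where
  eq_zero_iff : ∀ x, u x = 0 ↔ x = 0
  map_mul : ∀ x y, u (x * y) = u x * u y
  add_le : ∀ x y, u (x + y) ≤ max (u x) (u y)
  nonneg : ∀ x, 0 ≤ u x

namespace NA
variable {F : Type} [Field F] {u : F → ℝ}

lemma pos (h : NA u) {x : F} (hx : x ≠ 0) : 0 < u x :=
  lt_of_le_of_ne (h.nonneg x) (fun e => hx ((h.eq_zero_iff x).1 e.symm))

lemma zero (h : NA u) : u 0 = 0 := (h.eq_zero_iff 0).2 rfl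

lemma one (h : NA u) : u 1 = 1 := by
  have h1 := h.map_mul 1 1
  have h2 := h.pos (one_ne_zero (α := F))
  rw [mul_one] at h1
  nlinarith

lemma neg (h : NA u) (x : F) : u (-x) = u x := by
  have h1 := h.map_mul (-1) (-1)
  have h2 : 0 < u (-1) := h.pos (by simp)
  rw [neg_mul_neg, mul_one, h.one] at h1
  have h3 : u (-1) = 1 := by nlinarith
  rw [← neg_one_mul, h.map_mul, h3, one_mul]

lemma sub_le (h : NA u) (x y : F) : u (x - y) ≤ max (u x) (u y) := by
  rw [sub_eq_add_neg, ← h.neg y]; exact h.add_le _ _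

lemma sub_comm (h : NA u) (x y : F) : u (x - y) = u (y - x) := by
  rw [← h.neg, neg_sub]

lemma add_eq (h : NA u) {x y : F} (hxy : u y < u x) : u (x + y) = u x := by
  apply le_antisymm
  · exact (h.add_le x y).trans (by simp [hxy.le])
  · have := h.sub_le (x + y) y
    rw [add_sub_cancel_right] at this
    rcases le_max_iff.1 this with h1 | h1
    · exact h1
    · linarith

lemma sub_eq (h : NA u) {x y : F} (hxy : u y < u x) : u (x - y) = u x := by
  rw [sub_eq_add_neg]; exact h.add_eq (by rwa [h.neg])

lemma inv (h : NA u) (x : F) : u (x⁻¹) = (u x)⁻¹ := by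
  by_cases hx : x = 0
  · simp [hx, h.zero]
  · have := h.map_mul x x⁻¹
    rw [mul_inv_cancel₀ hx, h.one] at this
    exact eq_inv_of_mul_eq_one_right this.symm

lemma div (h : NA u) (x y : F) : u (x / y) = u x / u y := by
  rw [div_eq_mul_inv, h.map_mul, h.inv, div_eq_mul_inv]

lemma pow (h : NA u) (x : F) (n : ℕ) : u (x ^ n) = u x ^ n := by
  induction n with
  | zero => simp [h.one]
  | succ n ih => rw [pow_succ, h.map_mul, ih, pow_succ]

end NA

section basic
variable {Fq : Type} [Field Fq] [Fintype Fq]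

lemma IsAbsExt.na {v : L Fq → ℝ} (hv : IsAbsExt Fq v) : NA v :=
  ⟨hv.eq_zero_iff, hv.map_mul, hv.add_le, hv.nonneg⟩

lemma toL_inj : Function.Injective (toL Fq) := (toL Fq).injective

lemma IsAbsExt.nak {v : L Fq → ℝ} (hv : IsAbsExt Fq v) : NA (kabs Fq) where
  eq_zero_iff x := by rw [← hv.extends_kabs, hv.eq_zero_iff, map_eq_zero]
  map_mul x y := by rw [← hv.extends_kabs, ← hv.extends_kabs, ← hv.extends_kabs, _root_.map_mul, hv.map_mul]
  add_le x y := by simp only [← hv.extends_kabs, map_add]; exact hv.add_le _ _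
  nonneg x := by rw [← hv.extends_kabs]; exact hv.nonneg _

lemma polyToK_monomial (n : ℕ) (x : Fq) :
    polyToK Fq (monomial n x) = HahnSeries.single (-(n : ℤ)) x := by
  simp [polyToK, TT, eval₂_monomial, HahnSeries.single_pow, HahnSeries.C_apply]

lemma polyToK_coeff (f : Polynomial Fq) (z : ℤ) :
    (polyToK Fq f).coeff z = if z ≤ 0 then f.coeff (-z).toNat else 0 := by
  induction f using Polynomial.induction_on' with
  | add p q hp hq =>
    rw [map_add, HahnSeries.coeff_add, hp, hq]
    split_ifs <;> simp
  | monomial n x =>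
    rw [polyToK_monomial, HahnSeries.coeff_single, coeff_monomial]
    split_ifs <;> first | rfl | omega

lemma polyToK_inj : Function.Injective (polyToK Fq) := by
  intro f g h
  ext n
  have h1 := polyToK_coeff f (-(n : ℤ))
  have h2 := polyToK_coeff g (-(n : ℤ))
  rw [h, h2] at h1
  simpa using h1.symm

lemma polyToK_ne {f : Polynomial Fq} (hf : f ≠ 0) : polyToK Fq f ≠ 0 := by
  intro h; exact hf (polyToK_inj (by simpa using h))

lemma kabs_poly {f : Polynomial Fq} (hf : f ≠ 0) :
    kabs Fq (polyToK Fq f) = (Fintype.card Fq : ℝ) ^ (f.natDegree : ℝ) := by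
  have h0 := polyToK_ne hf
  have ho : (polyToK Fq f).order = -(f.natDegree : ℤ) := by
    apply le_antisymm
    · apply HahnSeries.order_le_of_coeff_ne_zero
      rw [polyToK_coeff]
      simpa using hf
    · by_contra hlt
      push Not at hlt
      have h1 : (polyToK Fq f).coeff (polyToK Fq f).order ≠ 0 :=
        HahnSeries.coeff_order_eq_zero.not.2 h0
      rw [polyToK_coeff, if_pos (by omega)] at h1
      exact h1 (coeff_eq_zero_of_natDegree_lt (by omega))
  rw [kabs, if_neg h0, ho, neg_neg, zpow_natCast, Real.rpow_natCast]

lemma card_gt : (1 : ℝ) < Fintype.card Fq := by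
  exact_mod_cast Fintype.one_lt_card

lemma kabs_poly_ge_one {f : Polynomial Fq} (hf : f ≠ 0) : 1 ≤ kabs Fq (polyToK Fq f) := by
  rw [kabs_poly hf]
  exact Real.one_le_rpow card_gt.le (by positivity)

lemma kabs_zero' : kabs Fq 0 = 0 := by simp [kabs]

lemma Hpoly_bdd (P : Polynomial (Polynomial Fq)) :
    BddAbove (Set.range fun i : ℕ => kabs Fq (polyToK Fq (P.coeff i))) := by
  apply Set.Finite.bddAbove
  apply ((Set.finite_le_nat P.natDegree).image
    (fun i : ℕ => kabs Fq (polyToK Fq (P.coeff i)))).union (Set.finite_singleton (0 : ℝ))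
    |>.subset
  rintro _ ⟨i, rfl⟩
  by_cases h : i ≤ P.natDegree
  · left; exact ⟨i, h, rfl⟩
  · right
    simp [coeff_eq_zero_of_natDegree_lt (not_le.1 h), kabs_zero']

lemma le_Hpoly (P : Polynomial (Polynomial Fq)) (i : ℕ) :
    kabs Fq (polyToK Fq (P.coeff i)) ≤ Hpoly Fq P :=
  le_ciSup (Hpoly_bdd P) i

lemma Hpoly_le {P : Polynomial (Polynomial Fq)} {M : ℝ}
    (h : ∀ i, kabs Fq (polyToK Fq (P.coeff i)) ≤ M) : Hpoly Fq P ≤ M := ciSup_le h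

lemma one_le_Hpoly {P : Polynomial (Polynomial Fq)} (hP : P ≠ 0) : 1 ≤ Hpoly Fq P :=
  (kabs_poly_ge_one (f := P.leadingCoeff) (by simpa using hP)).trans (le_Hpoly P P.natDegree)

lemma finite_polys {R : Type} [Semiring R] (S : Set R) (hS : S.Finite) (n : ℕ) :
    {P : Polynomial R | P.natDegree ≤ n ∧ ∀ i, P.coeff i ∈ S}.Finite := by
  have h1 : (Set.pi Set.univ (fun _ : Fin (n + 1) => S)).Finite := Set.Finite.pi' (fun _ => hS) |>.subset (by intro f hf i; exact hf i trivial)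
  refine Set.Finite.of_finite_image (f := fun P : Polynomial R => fun i : Fin (n + 1) => P.coeff i)
    (h1.subset ?_) ?_
  · rintro _ ⟨P, hP, rfl⟩ i _
    exact hP.2 i
  · intro P hP P' hP' h
    ext i
    by_cases hi : i < n + 1
    · exact congrFun h ⟨i, hi⟩
    · rw [coeff_eq_zero_of_natDegree_lt (lt_of_le_of_lt hP.1 (by omega)),
        coeff_eq_zero_of_natDegree_lt (lt_of_le_of_lt hP'.1 (by omega))]

lemma finite_height (B : ℝ) (n : ℕ) :
    {P : Polynomial (Polynomial Fq) | P.natDegree ≤ n ∧ Hpoly Fq P ≤ B}.Finite := by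
  obtain ⟨N, hN⟩ := pow_unbounded_of_one_lt B (card_gt (Fq := Fq))
  have hS : {f : Polynomial Fq | f.natDegree ≤ N}.Finite :=
    (finite_polys (Set.univ : Set Fq) Set.finite_univ N).subset (by intro f hf; exact ⟨hf, by simp⟩)
  refine (finite_polys _ hS n).subset ?_
  rintro P ⟨h1, h2⟩
  refine ⟨h1, fun i => ?_⟩
  by_cases h0 : P.coeff i = 0
  · simp [h0]
  have h3 := (le_Hpoly P i).trans h2
  rw [kabs_poly h0, Real.rpow_natCast] at h3
  have := lt_of_le_of_lt h3 hN
  exact ((pow_lt_pow_iff_right₀ card_gt).1 this).le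

lemma Hpoly_le_two {P : Polynomial (Polynomial Fq)} (hP : P.natDegree ≤ 2) {M : ℝ}
    (h0 : kabs Fq (polyToK Fq (P.coeff 0)) ≤ M) (h1 : kabs Fq (polyToK Fq (P.coeff 1)) ≤ M)
    (h2 : kabs Fq (polyToK Fq (P.coeff 2)) ≤ M) (hM : 0 ≤ M) : Hpoly Fq P ≤ M := by
  apply Hpoly_le
  intro i
  match i with
  | 0 => exact h0
  | 1 => exact h1
  | 2 => exact h2
  | (n + 3) =>
    rw [coeff_eq_zero_of_natDegree_lt (by omega)]
    simpa [kabs_zero'] using hM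

lemma evalK_two {P : Polynomial (Polynomial Fq)} (hP : P.natDegree ≤ 2) (x : K Fq) :
    evalK Fq P x = polyToK Fq (P.coeff 2) * x ^ 2 + polyToK Fq (P.coeff 1) * x
      + polyToK Fq (P.coeff 0) := by
  rw [evalK, eval₂_eq_sum_range' _ (n := 3) (by omega)]
  simp [Finset.sum_range_succ]; ring

lemma evalL_two {P : Polynomial (Polynomial Fq)} (hP : P.natDegree ≤ 2) (x : L Fq) :
    evalL Fq P x = toL Fq (polyToK Fq (P.coeff 2)) * x ^ 2 + toL Fq (polyToK Fq (P.coeff 1)) * x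
      + toL Fq (polyToK Fq (P.coeff 0)) := by
  rw [evalL, eval₂_eq_sum_range' _ (n := 3) (by omega)]
  simp [Finset.sum_range_succ, φ]; ring

end basic


section cf
variable {Fq : Type} [Field Fq] [Fintype Fq]

/-- The cross determinant of a sequence with its shift. -/
def W {R : Type} [CommRing R] (x : ℕ → R) (r s : ℕ) : R :=
  x r * x (r + s + 1) - x (r + 1) * x (r + s)

lemma W_succ {R : Type} [CommRing R] (x a : ℕ → R)
    (hx : ∀ n, x (n + 2) = a (n + 1) * x (n + 1) + x n) (r s : ℕ) :
    W x (r + 1) s = (a (r + s + 1) - a (r + 1)) * (x (r + 1) * x (r + s + 1)) - W x r s := by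
  have h1 := hx r
  have h2 := hx (r + s)
  unfold W
  rw [show r + 1 + s + 1 = r + s + 2 by ring, show r + 1 + 1 = r + 2 by ring,
    show r + 1 + s = r + s + 1 by ring, h1, h2]
  ring

lemma W_shift {R : Type} [CommRing R] (x a : ℕ → R)
    (hx : ∀ n, x (n + 2) = a (n + 1) * x (n + 1) + x n) (r s k : ℕ)
    (h : ∀ i, r < i → i ≤ r + k → a i = a (i + s)) :
    W x (r + k) s = W x r s ∨ W x (r + k) s = - W x r s := by
  induction k with
  | zero => left; rfl
  | succ k ih =>
    have h1 := W_succ x a hx (r + k) s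
    have h2 := h (r + k + 1) (by omega) (by omega)
    rw [show r + k + 1 + s = r + k + s + 1 by ring] at h2
    rw [← h2, sub_self, zero_mul, zero_sub] at h1
    rw [← add_assoc, h1]
    rcases ih (fun i hi hi' => h i hi (by omega)) with h3 | h3 <;> rw [h3]
    · right; rfl
    · left; simp

variable (a : ℕ → Polynomial Fq)

/-- Degree of the denominator of the `n`-th convergent. -/
def eD (n : ℕ) : ℕ := (qSeq Fq a (n + 1)).natDegree

lemma qSeq_rec (n : ℕ) : qSeq Fq a (n + 2) = a (n + 1) * qSeq Fq a (n + 1) + qSeq Fq a n := rfl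
lemma pSeq_rec (n : ℕ) : pSeq Fq a (n + 2) = a (n + 1) * pSeq Fq a (n + 1) + pSeq Fq a n := rfl

variable {a}

lemma qSeq_degree (ha : ∀ n, 1 ≤ n → 1 ≤ (a n).natDegree) (n : ℕ) :
    (qSeq Fq a n).degree < (qSeq Fq a (n + 1)).degree := by
  induction n with
  | zero => simp [qSeq]
  | succ n ih =>
    have h1 := ha (n + 1) (by omega)
    have h2 : (1 : WithBot ℕ) ≤ (a (n + 1)).degree := by
      rw [degree_eq_natDegree (by rintro h; simp [h] at h1)]
      exact_mod_cast h1
    have hne : qSeq Fq a (n + 1) ≠ 0 := by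
      intro h; rw [h] at ih; simp at ih
    have h3 : (qSeq Fq a (n + 1)).degree < (a (n + 1) * qSeq Fq a (n + 1)).degree := by
      have hane : a (n + 1) ≠ 0 := by rintro h; simp [h] at h1
      rw [degree_mul, degree_eq_natDegree hne, degree_eq_natDegree hane]
      norm_cast; omega
    rw [qSeq_rec, degree_add_eq_left_of_degree_lt (ih.trans h3)]
    exact h3

lemma qSeq_ne (ha : ∀ n, 1 ≤ n → 1 ≤ (a n).natDegree) (n : ℕ) : qSeq Fq a (n + 1) ≠ 0 := by
  intro h; have := qSeq_degree ha n; rw [h] at this; simp at this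

lemma eD_zero : eD a 0 = 0 := by simp [eD, qSeq]

lemma eD_succ (ha : ∀ n, 1 ≤ n → 1 ≤ (a n).natDegree) (n : ℕ) :
    eD a (n + 1) = (a (n + 1)).natDegree + eD a n := by
  have h1 := ha (n + 1) (by omega)
  have hane : a (n + 1) ≠ 0 := by rintro h; simp [h] at h1
  have hne := qSeq_ne ha n
  unfold eD
  rw [show n + 1 + 1 = n + 2 by ring, qSeq_rec, ← natDegree_mul hane hne]
  apply natDegree_eq_of_degree_eq
  apply degree_add_eq_left_of_degree_lt
  refine (qSeq_degree ha n).trans_le ?_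
  rw [degree_mul]
  rw [degree_eq_natDegree hne, degree_eq_natDegree hane]
  norm_cast; omega

lemma eD_mono (ha : ∀ n, 1 ≤ n → 1 ≤ (a n).natDegree) : StrictMono (eD a) := by
  apply strictMono_nat_of_lt_succ
  intro n
  have h1 := ha (n + 1) (by omega)
  rw [eD_succ ha]; omega

lemma kabs_q (ha : ∀ n, 1 ≤ n → 1 ≤ (a n).natDegree) (n : ℕ) :
    kabs Fq (polyToK Fq (qSeq Fq a (n + 1))) = (Fintype.card Fq : ℝ) ^ (eD a n : ℝ) :=
  kabs_poly (qSeq_ne ha n)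

variable (a)
/-- The linear form `q_{n-1} ξ - p_{n-1}`. -/
def DD (ξ : K Fq) (n : ℕ) : K Fq := polyToK Fq (qSeq Fq a n) * ξ - polyToK Fq (pSeq Fq a n)

lemma DD_rec (ξ : K Fq) (n : ℕ) :
    DD a ξ (n + 2) = polyToK Fq (a (n + 1)) * DD a ξ (n + 1) + DD a ξ n := by
  simp only [DD, qSeq_rec, pSeq_rec, map_add, map_mul]; ring

lemma det_pq (n : ℕ) : qSeq Fq a (n + 1) * pSeq Fq a n - pSeq Fq a (n + 1) * qSeq Fq a n = (-1) ^ n := by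
  induction n with
  | zero => simp [qSeq, pSeq]
  | succ n ih =>
    rw [qSeq_rec, pSeq_rec, pow_succ, ← ih]; ring
variable {a}

lemma kabs_D (hna : NA (kabs Fq)) {ξ : K Fq} (hξ : IsCFOf Fq ξ a) (n : ℕ) :
    kabs Fq (DD a ξ n) = (Fintype.card Fq : ℝ) ^ (-(eD a n : ℝ)) := by
  have hQ : (0 : ℝ) < Fintype.card Fq := by linarith [card_gt (Fq := Fq)]
  cases n with
  | zero => simp [DD, qSeq, pSeq, eD_zero, hna.neg, hna.one]
  | succ n =>
    have h1 := hξ.2 n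
    have h2 := qSeq_ne hξ.1 n
    have h3 := polyToK_ne h2
    have h4 : DD a ξ (n + 1) = polyToK Fq (qSeq Fq a (n + 1)) *
        (ξ - polyToK Fq (pSeq Fq a (n + 1)) / polyToK Fq (qSeq Fq a (n + 1))) := by
      unfold DD; field_simp
    have h5 := kabs_q hξ.1 (n + 1)
    have h6 := hna.pos h3
    rw [show n + 1 + 1 = n + 2 by ring] at h5
    rw [h4, hna.map_mul, h1, Real.rpow_neg hQ.le, ← h5]
    field_simp

lemma lin_lower (hna : NA (kabs Fq)) {ξ : K Fq} (hξ : IsCFOf Fq ξ a) {D : ℕ}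
    (hD : ∀ n, 1 ≤ n → (a n).natDegree ≤ D) (s u : Polynomial Fq) (hs : s ≠ 0) :
    (Fintype.card Fq : ℝ) ^ (-(D : ℝ) - (s.natDegree : ℝ)) ≤
      kabs Fq (polyToK Fq s * ξ - polyToK Fq u) := by
  have hQ1 := card_gt (Fq := Fq)
  have hQ : (0 : ℝ) < Fintype.card Fq := by linarith
  -- generic step
  have key : ∀ n, s.natDegree < eD a (n + 1) → u * qSeq Fq a (n + 1) - s * pSeq Fq a (n + 1) ≠ 0 →
      (Fintype.card Fq : ℝ) ^ (-(eD a n : ℝ)) ≤ kabs Fq (polyToK Fq s * ξ - polyToK Fq u) := by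
    intro n hn hne
    have h1 := kabs_poly_ge_one hne
    have h2 : polyToK Fq (u * qSeq Fq a (n + 1) - s * pSeq Fq a (n + 1)) =
        polyToK Fq s * DD a ξ (n + 1) -
          polyToK Fq (qSeq Fq a (n + 1)) * (polyToK Fq s * ξ - polyToK Fq u) := by
      simp only [DD, map_sub, map_mul]; ring
    rw [h2] at h1
    have h3 := h1.trans (hna.sub_le _ _)
    have h4 : kabs Fq (polyToK Fq s * DD a ξ (n + 1)) < 1 := by
      rw [hna.map_mul, kabs_D hna hξ, kabs_poly hs, ← Real.rpow_add hQ]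
      apply Real.rpow_lt_one_of_one_lt_of_neg hQ1
      have : (s.natDegree : ℝ) < eD a (n + 1) := by exact_mod_cast hn
      linarith
    rcases le_max_iff.1 h3 with h5 | h5
    · linarith
    · rw [hna.map_mul, kabs_q hξ.1] at h5
      rw [Real.rpow_neg hQ.le]
      rw [inv_le_iff_one_le_mul₀ (by positivity)]
      linarith
  have hex : ∃ n, s.natDegree < eD a n := ⟨s.natDegree + 1, by
    have := (eD_mono hξ.1).id_le (s.natDegree + 1); simp at this; omega⟩
  have hspec := Nat.find_spec hex
  set m := Nat.find hex with hm
  obtain ⟨n, hn⟩ : ∃ n, m = n + 1 := by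
    cases h : m with
    | zero => rw [h, eD_zero] at hspec; omega
    | succ n => exact ⟨n, rfl⟩
  have hmin : eD a n ≤ s.natDegree := by
    have := Nat.find_min hex (m := n) (by omega)
    omega
  rw [hn] at hspec
  have hstep := eD_succ hξ.1 n
  have hDn := hD (n + 1) (by omega)
  have mono : ∀ k, k ≤ n + 1 → (Fintype.card Fq : ℝ) ^ (-(D : ℝ) - (s.natDegree : ℝ)) ≤
      (Fintype.card Fq : ℝ) ^ (-(eD a k : ℝ)) := by
    intro k hk
    apply Real.rpow_le_rpow_of_exponent_le hQ1.le
    have h1 := (eD_mono hξ.1).monotone hk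
    have h2 : eD a k ≤ D + s.natDegree := by omega
    have h3 : (eD a k : ℝ) ≤ D + s.natDegree := by exact_mod_cast h2
    linarith
  by_cases h0 : u * qSeq Fq a (n + 1) - s * pSeq Fq a (n + 1) = 0
  · refine (mono (n + 1) le_rfl).trans (key (n + 1) ?_ ?_)
    · exact hspec.trans ((eD_mono hξ.1) (by omega))
    · intro h1
      have h2 := det_pq a (n + 1)
      have h3 : s * (-1) ^ (n + 1) = 0 := by
        rw [← h2]
        linear_combination qSeq Fq a (n + 2) * (-1) * h0 + qSeq Fq a (n + 1) * h1
      rcases mul_eq_zero.1 h3 with h4 | h4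
      · exact hs h4
      · simp at h4
  · exact (mono n (by omega)).trans (key n hspec h0)

end cf


section quad
variable {Fq : Type} [Field Fq] [Fintype Fq]

/-- Middle coefficient of the quadratic polynomial. -/
def cB (a : ℕ → Polynomial Fq) (r s : ℕ) : Polynomial Fq :=
  -(qSeq Fq a r * pSeq Fq a (r + s + 1) + pSeq Fq a r * qSeq Fq a (r + s + 1))
    + (qSeq Fq a (r + 1) * pSeq Fq a (r + s) + pSeq Fq a (r + 1) * qSeq Fq a (r + s))

/-- The quadratic polynomial attached to the periodic expansion with preperiod of length `r`
and period of length `s`. -/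
def PP (a : ℕ → Polynomial Fq) (r s : ℕ) : Polynomial (Polynomial Fq) :=
  C (W (qSeq Fq a) r s) * X ^ 2 + C (cB a r s) * X + C (W (pSeq Fq a) r s)

/-- What is needed about the quadratic polynomials approximating `ξ`. -/
structure Good (ξ : K Fq) (f : Polynomial Fq) (P : Polynomial (Polynomial Fq)) (A B C : ℝ) :
    Prop where
  deg : P.natDegree ≤ 2
  hA : kabs Fq (polyToK Fq (P.coeff 2)) = (Fintype.card Fq : ℝ) ^ A
  hB : kabs Fq (2 * polyToK Fq (P.coeff 2) * ξ + polyToK Fq (P.coeff 1)) =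
    (Fintype.card Fq : ℝ) ^ B
  hC : kabs Fq (evalK Fq P ξ) = (Fintype.card Fq : ℝ) ^ C
  content : ∀ g : Polynomial Fq, g ∣ P.coeff 2 → g ∣ P.coeff 1 → g ∣ P.coeff 0 → g ∣ f

lemma PP_c2 (a : ℕ → Polynomial Fq) (r s : ℕ) : (PP a r s).coeff 2 = W (qSeq Fq a) r s := by
  simp [PP]
lemma PP_c1 (a : ℕ → Polynomial Fq) (r s : ℕ) : (PP a r s).coeff 1 = cB a r s := by
  simp [PP, coeff_C, coeff_X_pow]
lemma PP_c0 (a : ℕ → Polynomial Fq) (r s : ℕ) : (PP a r s).coeff 0 = W (pSeq Fq a) r s := by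
  simp [PP]
lemma PP_deg (a : ℕ → Polynomial Fq) (r s : ℕ) : (PP a r s).natDegree ≤ 2 :=
  natDegree_quadratic_le

/-- A common divisor divides the first differing letters' difference. -/
lemma content_aux (a : ℕ → Polynomial Fq) (b d : Polynomial Fq) (r s r' : ℕ) (hs : 2 ≤ s)
    (hrr : r ≤ r') (hper : ∀ i, r < i → i ≤ r' → a i = a (i + s))
    (hb : ∀ i, 1 ≤ i → i < s → a (r' + i) = b) (hd : a (r' + s) = d) (g : Polynomial Fq)
    (h2 : g ∣ W (qSeq Fq a) r s) (h1 : g ∣ cB a r s) (h0 : g ∣ W (pSeq Fq a) r s) :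
    g ∣ b - d := by
  obtain ⟨k, rfl⟩ := Nat.exists_eq_add_of_le hrr
  have key : ∀ x y : Polynomial Fq,
      g ∣ W (fun n => qSeq Fq a n * x - pSeq Fq a n * y) (r + k) s := by
    intro x y
    have e1 : W (fun n => qSeq Fq a n * x - pSeq Fq a n * y) r s =
        W (qSeq Fq a) r s * x ^ 2 + cB a r s * (x * y) + W (pSeq Fq a) r s * y ^ 2 := by
      simp only [W, cB]; ring
    have e2 : g ∣ W (fun n => qSeq Fq a n * x - pSeq Fq a n * y) r s := by
      rw [e1]
      exact dvd_add (dvd_add (h2.mul_right _) (h1.mul_right _)) (h0.mul_right _)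
    rcases W_shift (fun n => qSeq Fq a n * x - pSeq Fq a n * y) a
      (fun n => by simp only [qSeq_rec, pSeq_rec]; ring) r s k hper with h | h
    · rw [h]; exact e2
    · rw [h]; exact (dvd_neg).2 e2
  set m := r + k with hm
  set X0 : ℕ → Polynomial Fq := fun n => qSeq Fq a n * pSeq Fq a m - pSeq Fq a n * qSeq Fq a m
    with hX0
  set Y0 : ℕ → Polynomial Fq :=
    fun n => qSeq Fq a n * pSeq Fq a (m + 1) - pSeq Fq a n * qSeq Fq a (m + 1) with hY0
  have rX : ∀ n, X0 (n + 2) = a (n + 1) * X0 (n + 1) + X0 n := by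
    intro n; simp only [hX0, qSeq_rec, pSeq_rec]; ring
  have rY : ∀ n, Y0 (n + 2) = a (n + 1) * Y0 (n + 1) + Y0 n := by
    intro n; simp only [hY0, qSeq_rec, pSeq_rec]; ring
  have hdet := det_pq a m
  have X00 : X0 m = 0 := by simp only [hX0]; ring
  have X01 : X0 (m + 1) = (-1) ^ m := by simp only [hX0]; exact hdet
  have Y00 : Y0 m = -(-1) ^ m := by simp only [hY0]; rw [← hdet]; ring
  have Y01 : Y0 (m + 1) = 0 := by simp only [hY0]; ring
  have kX := key (pSeq Fq a m) (qSeq Fq a m)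
  have kY := key (pSeq Fq a (m + 1)) (qSeq Fq a (m + 1))
  have uX : IsUnit ((-1 : Polynomial Fq) ^ m) := (isUnit_neg_one).pow m
  -- g divides X0 (m+s)
  have gX : g ∣ X0 (m + s) := by
    have : W X0 m s = -((-1) ^ m * X0 (m + s)) := by
      simp only [W, X00, X01]; ring
    rw [show W (fun n => qSeq Fq a n * pSeq Fq a m - pSeq Fq a n * qSeq Fq a m) m s = W X0 m s
      from rfl, this, dvd_neg] at kX
    exact (uX.dvd_mul_left).1 kX
  have gY : g ∣ Y0 (m + s + 1) := by
    have : W Y0 m s = -((-1) ^ m * Y0 (m + s + 1)) := by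
      simp only [W, Y00, Y01]; ring
    rw [show W (fun n => qSeq Fq a n * pSeq Fq a (m + 1) - pSeq Fq a n * qSeq Fq a (m + 1)) m s
      = W Y0 m s from rfl, this, dvd_neg] at kY
    exact (uX.dvd_mul_left).1 kY
  -- shift relation
  have rel : ∀ i, i + 2 ≤ s → Y0 (m + i + 1) = - X0 (m + i) * 1 ∧ Y0 (m + i + 2) = - X0 (m + i + 1) := by
    intro i
    induction i with
    | zero =>
      intro _
      refine ⟨by simp [X00, Y01], ?_⟩
      have := rY m
      rw [Y01, mul_zero, zero_add, Y00] at this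
      rw [add_zero, X01]; exact this
    | succ i ih =>
      intro hi
      obtain ⟨e1, e2⟩ := ih (by omega)
      refine ⟨by rw [mul_one]; exact e2, ?_⟩
      have f1 := rY (m + i + 1)
      have f2 := rX (m + i)
      have b1 := hb (i + 1) (by omega) (by omega)
      have b2 := hb (i + 2) (by omega) (by omega)
      rw [show m + (i + 1) + 2 = m + i + 1 + 2 by ring, f1,
        show m + (i + 1) + 1 = m + i + 2 by ring, f2,
        show m + i + 1 + 1 = m + (i + 2) by ring, b2,
        show m + i + 1 = m + (i + 1) by ring, b1,
        show m + (i + 2) = m + i + 2 by ring, e2,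
        show m + (i + 1) = m + i + 1 by ring, e1]
      ring
  obtain ⟨t, rfl⟩ : ∃ t, s = t + 2 := ⟨s - 2, by omega⟩
  obtain ⟨e1, e2⟩ := rel t le_rfl
  have f1 := rY (m + t + 1)
  have f2 := rX (m + t)
  have b1 := hb (t + 1) (by omega) (by omega)
  rw [show m + t + 1 + 1 = m + (t + 2) by ring, hd,
    show m + (t + 2) = m + t + 2 by ring, e2, e1] at f1
  rw [show m + t + 1 = m + (t + 1) by ring, b1, show m + (t + 1) = m + t + 1 by ring] at f2
  rw [show m + (t + 2) = m + t + 2 by ring] at gX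
  have f3 : g ∣ (b - d) * X0 (m + t + 1) := by
    have : (b - d) * X0 (m + t + 1) = Y0 (m + (t + 2) + 1) + X0 (m + t + 2) := by
      rw [show m + (t + 2) + 1 = m + t + 1 + 2 by ring, f1, f2]; ring
    rw [this]; exact dvd_add gY gX
  -- coprimality
  have cop : ∀ i, IsCoprime (X0 (m + i + 1)) (X0 (m + i)) := by
    intro i
    induction i with
    | zero =>
      rw [add_zero, X00, X01]
      exact isCoprime_zero_right.2 uX
    | succ i ih =>
      have := rX (m + i)
      rw [show m + (i + 1) + 1 = m + i + 2 by ring, this, show m + (i + 1) = m + i + 1 by ring]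
      rw [add_comm]
      have h4 := IsCoprime.add_mul_right_left ih.symm (a (m + i + 1))
      exact h4
  have hc : IsCoprime (X0 (m + t + 2)) (X0 (m + t + 1)) := cop (t + 1)
  have hg : IsCoprime g (X0 (m + t + 1)) := hc.of_isCoprime_of_dvd_left gX
  exact hg.dvd_of_dvd_mul_right f3

lemma good_PP (hna : NA (kabs Fq)) {ξ : K Fq} {a : ℕ → Polynomial Fq} (hξ : IsCFOf Fq ξ a)
    (b d : Polynomial Fq) (r s R r' : ℕ) (hs : 2 ≤ s) (hr : 1 ≤ r)
    (hrs : a r ≠ a (r + s)) (hR : r + s < R)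
    (hper : ∀ i, r < i → i + s < R → a i = a (i + s)) (hRs : a R ≠ a (R - s))
    (hrr : r ≤ r') (hr' : r' + s < R)
    (hb : ∀ i, 1 ≤ i → i < s → a (r' + i) = b) (hd : a (r' + s) = d) :
    Good ξ (b - d) (PP a r s)
      ((a (r + s) - a r).natDegree + eD a (r - 1) + eD a (r + s - 1))
      (eD a (r + s) - eD a r)
      ((a R - a (R - s)).natDegree - eD a R - eD a (R - s)) := by
  have hQ1 := card_gt (Fq := Fq)
  have hQ : (0 : ℝ) < Fintype.card Fq := by linarith
  have ha := hξ.1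
  have hmono := eD_mono ha
  have cast_lt : ∀ {i j : ℕ}, i < j → (eD a i : ℝ) < eD a j := by
    intro i j h; exact_mod_cast hmono h
  have hxiD : ∀ n, kabs Fq (DD a ξ n) = _ := kabs_D hna hξ
  have hq : ∀ n, kabs Fq (polyToK Fq (qSeq Fq a (n + 1))) = _ := kabs_q ha
  have rp : ∀ x y : ℝ, (Fintype.card Fq : ℝ) ^ x * (Fintype.card Fq : ℝ) ^ y =
      (Fintype.card Fq : ℝ) ^ (x + y) := fun x y => (Real.rpow_add hQ x y).symm
  have rlt : ∀ {x y : ℝ}, x < y → (Fintype.card Fq : ℝ) ^ x < (Fintype.card Fq : ℝ) ^ y :=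
    fun h => Real.rpow_lt_rpow_of_exponent_lt hQ1 h
  have rle : ∀ {x y : ℝ}, x ≤ y → (Fintype.card Fq : ℝ) ^ x ≤ (Fintype.card Fq : ℝ) ^ y :=
    fun h => Real.rpow_le_rpow_of_exponent_le hQ1.le h
  have cnn : ∀ i : ℕ, (0 : ℝ) ≤ eD a i := fun i => by positivity
  obtain ⟨r0, rfl⟩ : ∃ r0, r = r0 + 1 := ⟨r - 1, by omega⟩
  have hq0 : ∀ n, kabs Fq (polyToK Fq (qSeq Fq a n)) < (Fintype.card Fq : ℝ) ^ (eD a n : ℝ) := by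
    intro n
    cases n with
    | zero => rw [show qSeq Fq a 0 = 0 from rfl, map_zero, hna.zero]; positivity
    | succ n => rw [hq]; exact rlt (cast_lt (by omega))
  refine ⟨PP_deg _ _ _, ?_, ?_, ?_, ?_⟩
  · -- leading coefficient
    rw [PP_c2, W_succ _ a (qSeq_rec a), map_sub]
    have hne : a (r0 + s + 1) - a (r0 + 1) ≠ 0 := by
      rw [sub_ne_zero, show r0 + s + 1 = r0 + 1 + s by ring]; exact hrs.symm
    have h1 : kabs Fq (polyToK Fq ((a (r0 + s + 1) - a (r0 + 1)) *
        (qSeq Fq a (r0 + 1) * qSeq Fq a (r0 + s + 1)))) = (Fintype.card Fq : ℝ) ^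
          (((a (r0 + s + 1) - a (r0 + 1)).natDegree : ℝ) + (eD a r0 + eD a (r0 + s))) := by
      rw [map_mul, map_mul, hna.map_mul, hna.map_mul, hq, hq, kabs_poly hne, rp, rp]
    rw [hna.sub_eq, h1]
    · congr 1
      rw [show r0 + 1 + s = r0 + s + 1 by ring, Nat.add_sub_cancel, Nat.add_sub_cancel]
      ring
    · rw [h1]
      have h2 : (Fintype.card Fq : ℝ) ^ ((eD a r0 : ℝ) + eD a (r0 + s)) ≤ (Fintype.card Fq : ℝ) ^
          (((a (r0 + s + 1) - a (r0 + 1)).natDegree : ℝ) + (eD a r0 + eD a (r0 + s))) :=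
        rle (by linarith [Nat.cast_nonneg (α := ℝ) (a (r0 + s + 1) - a (r0 + 1)).natDegree])
      refine lt_of_lt_of_le ?_ h2
      unfold W
      rw [map_sub, map_mul, map_mul]
      refine lt_of_le_of_lt (hna.sub_le _ _) (max_lt ?_ ?_)
      · rw [hna.map_mul, hq, ← rp]
        exact mul_lt_mul_of_pos_right (hq0 _) (by positivity)
      · rw [hna.map_mul, hq, ← rp]
        exact mul_lt_mul_of_pos_left (hq0 _) (by positivity)
  · -- derivative
    rw [PP_c2, PP_c1]
    set r := r0 + 1 with hrdef
    have h1 : 2 * polyToK Fq (W (qSeq Fq a) r s) * ξ + polyToK Fq (cB a r s) =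
        DD a ξ r * polyToK Fq (qSeq Fq a (r + s + 1)) +
        (polyToK Fq (qSeq Fq a r) * DD a ξ (r + s + 1) -
          (polyToK Fq (qSeq Fq a (r + 1)) * DD a ξ (r + s) +
          DD a ξ (r + 1) * polyToK Fq (qSeq Fq a (r + s)))) := by
      simp only [DD, W, cB, map_add, map_sub, map_mul, map_neg]; ring
    have h2 : kabs Fq (DD a ξ r * polyToK Fq (qSeq Fq a (r + s + 1))) =
        (Fintype.card Fq : ℝ) ^ ((eD a (r + s) : ℝ) - eD a r) := by
      rw [hna.map_mul, hxiD, hq, rp]; congr 1; ring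
    have l1 : (eD a r : ℝ) < eD a (r + s) := cast_lt (by omega)
    rw [h1, hna.add_eq, h2]
    rw [h2]
    refine lt_of_le_of_lt (hna.sub_le _ _) (max_lt ?_ ?_)
    · rw [hna.map_mul, hxiD, hrdef, hq, ← hrdef, rp]
      apply rlt
      have := cast_lt (show r0 < r + s by omega)
      have := cast_lt (show r < r + s + 1 by omega)
      linarith
    · refine lt_of_le_of_lt (hna.add_le _ _) (max_lt ?_ ?_)
      · rw [hna.map_mul, hxiD, hq, rp]
        apply rlt; linarith
      · rw [hna.map_mul, hxiD, show r + s = (r + s - 1) + 1 by omega, hq, rp]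
        apply rlt
        rw [show (r + s - 1) + 1 = r + s by omega]
        have := cast_lt (show r < r + 1 by omega)
        have := cast_lt (show r + s - 1 < r + s by omega)
        linarith
  · -- value at ξ
    set r := r0 + 1 with hrdef
    have h1 : evalK Fq (PP a r s) ξ = W (DD a ξ) r s := by
      rw [evalK_two (PP_deg _ _ _), PP_c2, PP_c1, PP_c0]
      simp only [DD, W, cB, map_add, map_sub, map_mul, map_neg]; ring
    obtain ⟨k, hk⟩ : ∃ k, R = r + k + s + 1 := ⟨R - r - s - 1, by omega⟩
    have h2 : kabs Fq (W (DD a ξ) r s) = kabs Fq (W (DD a ξ) (r + k) s) := by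
      rcases W_shift (DD a ξ) (fun n => polyToK Fq (a n)) (DD_rec a ξ) r s k
        (fun i hi hi' => congrArg _ (hper i hi (by omega))) with h | h
      · rw [h]
      · rw [h, hna.neg]
    have h3 := W_succ (DD a ξ) (fun n => polyToK Fq (a n)) (DD_rec a ξ) (r + k) s
    have hRs' : R - s = r + k + 1 := by omega
    rw [hRs', hk] at hRs
    have hne : a (r + k + s + 1) - a (r + k + 1) ≠ 0 := sub_ne_zero.2 hRs
    have h4 : W (DD a ξ) (r + k) s = polyToK Fq (a (r + k + s + 1) - a (r + k + 1)) *
        (DD a ξ (r + k + 1) * DD a ξ (r + k + s + 1)) - W (DD a ξ) (r + k + 1) s := by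
      rw [h3, map_sub]; ring
    have h5 : kabs Fq (polyToK Fq (a (r + k + s + 1) - a (r + k + 1)) *
        (DD a ξ (r + k + 1) * DD a ξ (r + k + s + 1))) = (Fintype.card Fq : ℝ) ^
        (((a (r + k + s + 1) - a (r + k + 1)).natDegree : ℝ) - eD a (r + k + s + 1)
          - eD a (r + k + 1)) := by
      rw [hna.map_mul, hna.map_mul, hxiD, hxiD, kabs_poly hne, rp, rp]
      congr 1; ring
    rw [h1, h2, h4, hna.sub_eq, h5, hRs', hk]
    rw [h5]
    have h6 : (Fintype.card Fq : ℝ) ^ (-(eD a (r + k + s + 1) : ℝ) - eD a (r + k + 1)) ≤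
      (Fintype.card Fq : ℝ) ^
        (((a (r + k + s + 1) - a (r + k + 1)).natDegree : ℝ) - eD a (r + k + s + 1)
          - eD a (r + k + 1)) := rle (by
            linarith [Nat.cast_nonneg (α := ℝ) (a (r + k + s + 1) - a (r + k + 1)).natDegree])
    refine lt_of_lt_of_le ?_ h6
    unfold W
    refine lt_of_le_of_lt (hna.sub_le _ _) (max_lt ?_ ?_)
    · rw [hna.map_mul, hxiD, hxiD, rp]
      apply rlt
      have := cast_lt (show r + k + s + 1 < r + k + 1 + s + 1 by omega)
      linarith
    · rw [hna.map_mul, hxiD, hxiD, rp]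
      apply rlt
      have := cast_lt (show r + k + 1 < r + k + 1 + 1 by omega)
      rw [show r + k + 1 + s = r + k + s + 1 by ring]
      linarith
  · intro g h2 h1 h0
    rw [PP_c2] at h2; rw [PP_c1] at h1; rw [PP_c0] at h0
    exact content_aux a b d _ s r' hs hrr (fun i hi hi' => hper i hi (by omega)) hb hd g h2 h1 h0

end quad


section analysis
variable {Fq : Type} [Field Fq] [Fintype Fq]

/-- No rational root (homogeneous form). -/
def NoRoot (P : Polynomial (Polynomial Fq)) : Prop :=
  ∀ u s : Polynomial Fq, s ≠ 0 →
    P.coeff 2 * u ^ 2 + P.coeff 1 * (u * s) + P.coeff 0 * s ^ 2 ≠ 0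

lemma Good.ne {ξ : K Fq} {f : Polynomial Fq} {P : Polynomial (Polynomial Fq)} {A B C : ℝ}
    (hna : NA (kabs Fq)) (hg : Good ξ f P A B C) : P.coeff 2 ≠ 0 := by
  intro h
  have h1 := hg.hA
  have hQ1 := card_gt (Fq := Fq)
  have hQ : (0 : ℝ) < Fintype.card Fq := by linarith
  rw [h, map_zero, hna.zero] at h1
  have := Real.rpow_pos_of_pos hQ A
  linarith

lemma no_root (hna : NA (kabs Fq)) {a : ℕ → Polynomial Fq} {ξ : K Fq} (hξ : IsCFOf Fq ξ a) {D : ℕ}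
    (hD : ∀ n, 1 ≤ n → (a n).natDegree ≤ D) {f : Polynomial Fq}
    {P : Polynomial (Polynomial Fq)} {A B C : ℝ} (hg : Good ξ f P A B C)
    (hAC : A + C < -2 * D) : NoRoot P := by
  classical
  have hQ1 := card_gt (Fq := Fq)
  have hQ : (0 : ℝ) < Fintype.card Fq := by linarith
  have hA0 := hg.ne hna
  -- coprime case
  have cop : ∀ u s : Polynomial Fq, s ≠ 0 → IsCoprime u s →
      P.coeff 2 * u ^ 2 + P.coeff 1 * (u * s) + P.coeff 0 * s ^ 2 ≠ 0 := by
    intro u s hs hus h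
    have h1 : s ∣ P.coeff 2 * u ^ 2 := by
      refine ⟨-(P.coeff 1 * u + P.coeff 0 * s), ?_⟩
      linear_combination h
    have h2 : s ∣ P.coeff 2 := (hus.symm.pow_right).dvd_of_dvd_mul_right h1
    obtain ⟨a', ha'⟩ := h2
    have h3 : a' * u ^ 2 + P.coeff 1 * u + P.coeff 0 * s = 0 := by
      apply mul_left_cancel₀ hs
      rw [ha'] at h
      linear_combination h
    have h4 : s ∣ u * (a' * u + P.coeff 1) := ⟨-P.coeff 0, by linear_combination h3⟩
    obtain ⟨e, he⟩ := (hus.symm).dvd_of_dvd_mul_left h4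
    have h5 : P.coeff 0 = -(u * e) := by
      apply mul_left_cancel₀ hs
      linear_combination h3 - u * he
    have h6 : P.coeff 1 = s * e - u * a' := by linear_combination he
    have ha0 : a' ≠ 0 := by
      rintro rfl; rw [mul_zero] at ha'; exact hA0 ha'
    have h7 : evalK Fq P ξ = (polyToK Fq s * ξ - polyToK Fq u) *
        (polyToK Fq a' * ξ - polyToK Fq (-e)) := by
      rw [evalK_two hg.deg, ha', h6, h5]
      simp only [map_sub, map_mul, map_neg]; ring
    have h8 := lin_lower hna hξ hD s u hs
    have h9 := lin_lower hna hξ hD a' (-e) ha0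
    have h10 := hg.hC
    rw [h7, hna.map_mul] at h10
    have h11 := mul_le_mul h8 h9 (by positivity) (hna.nonneg _)
    rw [h10, ← Real.rpow_add hQ] at h11
    have h12 := (Real.rpow_le_rpow_left_iff hQ1).1 h11
    have h13 := hg.hA
    rw [kabs_poly hA0, ha', natDegree_mul hs ha0] at h13
    have h14 : ((s.natDegree + a'.natDegree : ℕ) : ℝ) = A := by
      apply le_antisymm
      · exact (Real.rpow_le_rpow_left_iff hQ1).1 h13.le
      · exact (Real.rpow_le_rpow_left_iff hQ1).1 h13.ge
    push_cast at h14
    linarith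
  intro u s hs h
  obtain ⟨u', s', hus, hu, hs'⟩ : ∃ u' s' : Polynomial Fq, IsCoprime u' s' ∧
      u = EuclideanDomain.gcd u s * u' ∧ s = EuclideanDomain.gcd u s * s' := by
    have hg0 : EuclideanDomain.gcd u s ≠ 0 := by
      intro h0; rw [EuclideanDomain.gcd_eq_zero_iff] at h0; exact hs h0.2
    obtain ⟨u', hu⟩ := EuclideanDomain.gcd_dvd_left u s
    obtain ⟨s', hs'⟩ := EuclideanDomain.gcd_dvd_right u s
    refine ⟨u', s', ?_, hu, hs'⟩
    have hb := EuclideanDomain.gcd_eq_gcd_ab u s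
    refine ⟨EuclideanDomain.gcdA u s, EuclideanDomain.gcdB u s, ?_⟩
    apply mul_left_cancel₀ hg0
    set g := EuclideanDomain.gcd u s
    set x := EuclideanDomain.gcdA u s
    set y := EuclideanDomain.gcdB u s
    calc g * (x * u' + y * s') = (g * u') * x + (g * s') * y := by ring
      _ = u * x + s * y := by rw [← hu, ← hs']
      _ = g * 1 := by rw [mul_one]; exact hb.symm
  have hg0 : EuclideanDomain.gcd u s ≠ 0 := by
    intro h0; rw [h0, zero_mul] at hs'; exact hs hs'
  refine cop u' s' (by rintro rfl; rw [mul_zero] at hs'; exact hs hs') hus ?_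
  set g := EuclideanDomain.gcd u s
  apply mul_left_cancel₀ (pow_ne_zero 2 hg0)
  rw [hu, hs'] at h
  linear_combination h

lemma kabs_two_le (hna : NA (kabs Fq)) : kabs Fq 2 ≤ 1 := by
  have : (2 : K Fq) = 1 + 1 := by norm_num
  rw [this]
  refine (hna.add_le 1 1).trans ?_
  simp [hna.one]

lemma shift_b_le (hna : NA (kabs Fq)) {ξ : K Fq} (h1 : kabs Fq ξ ≤ 1)
    (P : Polynomial (Polynomial Fq)) :
    kabs Fq (2 * polyToK Fq (P.coeff 2) * ξ + polyToK Fq (P.coeff 1)) ≤ Hpoly Fq P := by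
  refine (hna.add_le _ _).trans (max_le ?_ (le_Hpoly P 1))
  rw [hna.map_mul, hna.map_mul]
  have h2 := le_Hpoly P 2
  have h3 := kabs_two_le hna
  have n1 := hna.nonneg (polyToK Fq (P.coeff 2))
  calc kabs Fq 2 * kabs Fq (polyToK Fq (P.coeff 2)) * kabs Fq ξ
      ≤ 1 * kabs Fq (polyToK Fq (P.coeff 2)) * 1 := by
        gcongr
        exact hna.nonneg _
    _ ≤ _ := by linarith

lemma proportional (hna : NA (kabs Fq)) {ξ : K Fq} (hξ1 : kabs Fq ξ ≤ 1) {f : Polynomial Fq}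
    {P' P : Polynomial (Polynomial Fq)} {A B C h x : ℝ} (hg : Good ξ f P' A B C)
    (hno : NoRoot P') (hdeg : P.natDegree ≤ 2) (hH : Hpoly Fq P = (Fintype.card Fq : ℝ) ^ h)
    (hx : kabs Fq (evalK Fq P ξ) ≤ (Fintype.card Fq : ℝ) ^ (-(x * h)))
    (hB0 : 0 ≤ B) (hBA : B ≤ A) (hCA : C ≤ A) (hh : 0 ≤ h) (h5 : 2 * h + A + C < 0)
    (h6 : A + B < (x - 1) * h) :
    P'.coeff 2 * P.coeff 1 = P.coeff 2 * P'.coeff 1 ∧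
    P'.coeff 2 * P.coeff 0 = P.coeff 2 * P'.coeff 0 := by
  have hQ1 := card_gt (Fq := Fq)
  have hQ : (0 : ℝ) < Fintype.card Fq := by linarith
  have hA0 := hg.ne hna
  set a := P.coeff 2
  set b := P.coeff 1
  set c := P.coeff 0
  set a' := P'.coeff 2 with ha'
  set b' := P'.coeff 1 with hb'
  set c' := P'.coeff 0 with hc'
  set u := a * c' - a' * c with hu
  set s := a * b' - a' * b with hs
  set t := b * c' - b' * c with ht
  have hres : u ^ 2 - s * t = 0 := by
    by_contra hne
    have h1 := kabs_poly_ge_one hne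
    set x2 := polyToK Fq a
    set x1 := 2 * polyToK Fq a * ξ + polyToK Fq b with hx1
    set x0 := evalK Fq P ξ with hx0
    set y2 := polyToK Fq a' with hy2
    set y1 := 2 * polyToK Fq a' * ξ + polyToK Fq b' with hy1
    set y0 := evalK Fq P' ξ with hy0
    have e1 : polyToK Fq (u ^ 2 - s * t) =
        (x2 * y0 - y2 * x0) ^ 2 - (x2 * y1 - y2 * x1) * (x1 * y0 - y1 * x0) := by
      rw [hx0, hy0, evalK_two hdeg, evalK_two hg.deg]
      simp only [hu, hs, ht, map_sub, map_mul, map_pow, hx1, hy1]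
      ring
    have bx2 : kabs Fq x2 ≤ (Fintype.card Fq : ℝ) ^ h := hH ▸ le_Hpoly P 2
    have bx1 : kabs Fq x1 ≤ (Fintype.card Fq : ℝ) ^ h := hH ▸ shift_b_le hna hξ1 P
    have by2 : kabs Fq y2 ≤ (Fintype.card Fq : ℝ) ^ A := hg.hA.le
    have by1 : kabs Fq y1 ≤ (Fintype.card Fq : ℝ) ^ B := hg.hB.le
    have by0 : kabs Fq y0 ≤ (Fintype.card Fq : ℝ) ^ C := hg.hC.le
    have pm : ∀ {x y : K Fq} {α β : ℝ}, kabs Fq x ≤ (Fintype.card Fq : ℝ) ^ α →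
        kabs Fq y ≤ (Fintype.card Fq : ℝ) ^ β →
        kabs Fq (x * y) ≤ (Fintype.card Fq : ℝ) ^ (α + β) := by
      intro x y α β h1 h2
      rw [hna.map_mul, Real.rpow_add hQ]
      exact mul_le_mul h1 h2 (hna.nonneg _) (by positivity)
    have lt1 : ∀ {x : K Fq} {α : ℝ}, kabs Fq x ≤ (Fintype.card Fq : ℝ) ^ α → α < 0 →
        kabs Fq x < 1 := fun h1 h2 =>
      lt_of_le_of_lt h1 (Real.rpow_lt_one_of_one_lt_of_neg hQ1 h2)
    have e2 : (x2 * y0 - y2 * x0) ^ 2 - (x2 * y1 - y2 * x1) * (x1 * y0 - y1 * x0) =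
        (x2 * y0 - y2 * x0) ^ 2 - ((x2 * y1) * (x1 * y0) - (x2 * y1) * (y1 * x0)
          - ((y2 * x1) * (x1 * y0) - (y2 * x1) * (y1 * x0))) := by ring
    rw [e1, e2] at h1
    have sublt : ∀ {x y : K Fq}, kabs Fq x < 1 → kabs Fq y < 1 → kabs Fq (x - y) < 1 :=
      fun h1 h2 => lt_of_le_of_lt (hna.sub_le _ _) (max_lt h1 h2)
    refine absurd h1 (not_le.2 (sublt ?_ (sublt (sublt ?_ ?_) (sublt ?_ ?_))))
    · rw [hna.pow]
      refine pow_lt_one₀ (hna.nonneg _) (sublt ?_ ?_) (by norm_num)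
      · exact lt1 (pm bx2 by0) (by linarith)
      · exact lt1 (pm by2 hx) (by linarith)
    · exact lt1 (pm (pm bx2 by1) (pm bx1 by0)) (by linarith)
    · exact lt1 (pm (pm bx2 by1) (pm by1 hx)) (by linarith)
    · exact lt1 (pm (pm by2 bx1) (pm bx1 by0)) (by linarith)
    · exact lt1 (pm (pm by2 bx1) (pm by1 hx)) (by linarith)
  by_cases hs0 : s = 0
  · have hu0 : u = 0 := by
      rw [hs0, zero_mul, sub_zero] at hres
      exact pow_eq_zero_iff (two_ne_zero) |>.1 hres
    exact ⟨by linear_combination -hs0 + hs, by linear_combination -hu0 + hu⟩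
  · exfalso
    refine hno (-u) s hs0 ?_
    rw [← ha', ← hb', ← hc']
    have : a' * t - b' * u + c' * s = 0 := by rw [hu, hs, ht]; ring
    linear_combination a' * hres + s * this

lemma prop_height (hna : NA (kabs Fq)) {ξ : K Fq} {f : Polynomial Fq} (hf : f ≠ 0)
    {P' P : Polynomial (Polynomial Fq)} {A B C : ℝ} (hg : Good ξ f P' A B C)
    (hdeg : P.natDegree ≤ 2) (hP : P ≠ 0)
    (h1 : P'.coeff 2 * P.coeff 1 = P.coeff 2 * P'.coeff 1)
    (h0 : P'.coeff 2 * P.coeff 0 = P.coeff 2 * P'.coeff 0) :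
    P.coeff 2 ≠ 0 ∧ (Fintype.card Fq : ℝ) ^ (A - f.natDegree) ≤ Hpoly Fq P := by
  classical
  have hQ1 := card_gt (Fq := Fq)
  have hQ : (0 : ℝ) < Fintype.card Fq := by linarith
  have hA0 := hg.ne hna
  have hne : P.coeff 2 ≠ 0 := by
    intro h
    rw [h, zero_mul] at h1 h0
    have e1 : P.coeff 1 = 0 := (mul_eq_zero.1 h1).resolve_left hA0
    have e0 : P.coeff 0 = 0 := (mul_eq_zero.1 h0).resolve_left hA0
    apply hP
    ext1 i
    match i with
    | 0 => simpa using e0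
    | 1 => simpa using e1
    | 2 => simpa using h
    | (n + 3) => rw [coeff_eq_zero_of_natDegree_lt (by omega)]; simp
  refine ⟨hne, ?_⟩
  set a := P.coeff 2
  set a' := P'.coeff 2
  obtain ⟨x, hx⟩ := EuclideanDomain.gcd_dvd_left a a'
  obtain ⟨y, hy⟩ := EuclideanDomain.gcd_dvd_right a a'
  have hb := EuclideanDomain.gcd_eq_gcd_ab a a'
  set g := EuclideanDomain.gcd a a'
  have hg0 : g ≠ 0 := by intro h; rw [h, zero_mul] at hx; exact hne hx
  have hx0 : x ≠ 0 := by rintro rfl; rw [mul_zero] at hx; exact hne hx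
  have hy0 : y ≠ 0 := by rintro rfl; rw [mul_zero] at hy; exact hA0 hy
  have hcop : IsCoprime y x := by
    refine ⟨EuclideanDomain.gcdB a a', EuclideanDomain.gcdA a a', ?_⟩
    apply mul_left_cancel₀ hg0
    rw [mul_one]
    set z := EuclideanDomain.gcdA a a'
    set t := EuclideanDomain.gcdB a a'
    calc g * (t * y + z * x) = (g * x) * z + (g * y) * t := by ring
      _ = a * z + a' * t := by rw [← hx, ← hy]
      _ = g := hb.symm
  have dv : ∀ i, a' * P.coeff i = a * P'.coeff i → y ∣ P'.coeff i := by
    intro i hi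
    have : y * P.coeff i = x * P'.coeff i := by
      apply mul_left_cancel₀ hg0
      rw [← mul_assoc, ← mul_assoc, ← hx, ← hy, hi]
    exact hcop.dvd_of_dvd_mul_left ⟨_, this.symm⟩
  have hyf := hg.content y (dv 2 (mul_comm _ _)) (dv 1 h1) (dv 0 h0)
  have hyd := natDegree_le_of_dvd hyf hf
  have hAd : A = a'.natDegree := by
    have h13 := hg.hA
    rw [kabs_poly hA0] at h13
    apply le_antisymm
    · exact (Real.rpow_le_rpow_left_iff hQ1).1 h13.ge
    · exact (Real.rpow_le_rpow_left_iff hQ1).1 h13.le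
  refine le_trans ?_ (le_Hpoly P 2)
  rw [kabs_poly hne]
  apply Real.rpow_le_rpow_of_exponent_le hQ1.le
  have d1 : a'.natDegree = g.natDegree + y.natDegree := by
    conv_lhs => rw [hy]
    exact natDegree_mul hg0 hy0
  have d2 : (P.coeff 2).natDegree = g.natDegree + x.natDegree := by
    change a.natDegree = _
    conv_lhs => rw [hx]
    exact natDegree_mul hg0 hx0
  have : a'.natDegree ≤ (P.coeff 2).natDegree + f.natDegree := by omega
  have : (a'.natDegree : ℝ) ≤ (P.coeff 2).natDegree + f.natDegree := by exact_mod_cast this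
  rw [hAd]; linarith

lemma prop_eval {ξ : K Fq} {P' P : Polynomial (Polynomial Fq)}
    (hdeg : P.natDegree ≤ 2) (hdeg' : P'.natDegree ≤ 2)
    (h1 : P'.coeff 2 * P.coeff 1 = P.coeff 2 * P'.coeff 1)
    (h0 : P'.coeff 2 * P.coeff 0 = P.coeff 2 * P'.coeff 0) :
    polyToK Fq (P'.coeff 2) * evalK Fq P ξ = polyToK Fq (P.coeff 2) * evalK Fq P' ξ := by
  have e1 := congrArg (polyToK Fq) h1
  have e0 := congrArg (polyToK Fq) h0
  simp only [map_mul] at e1 e0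
  rw [evalK_two hdeg, evalK_two hdeg']
  linear_combination ξ * e1 + e0

lemma prop_evalL {α : L Fq} {P' P : Polynomial (Polynomial Fq)}
    (hdeg : P.natDegree ≤ 2) (hdeg' : P'.natDegree ≤ 2)
    (h1 : P'.coeff 2 * P.coeff 1 = P.coeff 2 * P'.coeff 1)
    (h0 : P'.coeff 2 * P.coeff 0 = P.coeff 2 * P'.coeff 0) :
    toL Fq (polyToK Fq (P'.coeff 2)) * evalL Fq P α =
      toL Fq (polyToK Fq (P.coeff 2)) * evalL Fq P' α := by
  have e1 := congrArg (fun z => toL Fq (polyToK Fq z)) h1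
  have e0 := congrArg (fun z => toL Fq (polyToK Fq z)) h0
  simp only [map_mul] at e1 e0
  rw [evalL_two hdeg, evalL_two hdeg']
  linear_combination α * e1 + e0

lemma Good.height_le (hna : NA (kabs Fq)) {ξ : K Fq} (hξ1 : kabs Fq ξ ≤ 1) {f : Polynomial Fq}
    {P : Polynomial (Polynomial Fq)} {A B C : ℝ} (hg : Good ξ f P A B C) (hBA : B ≤ A)
    (hCA : C ≤ A) : Hpoly Fq P = (Fintype.card Fq : ℝ) ^ A := by
  have hQ1 := card_gt (Fq := Fq)
  have hQ : (0 : ℝ) < Fintype.card Fq := by linarith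
  have rle : ∀ {x y : ℝ}, x ≤ y → (Fintype.card Fq : ℝ) ^ x ≤ (Fintype.card Fq : ℝ) ^ y :=
    fun h => Real.rpow_le_rpow_of_exponent_le hQ1.le h
  have mulξ : ∀ {x : K Fq} {M : ℝ}, kabs Fq x ≤ M → kabs Fq (x * ξ) ≤ M := by
    intro x M h
    rw [hna.map_mul]
    exact (mul_le_of_le_one_right (hna.nonneg _) hξ1).trans h
  have b2 : kabs Fq (polyToK Fq (P.coeff 2)) ≤ (Fintype.card Fq : ℝ) ^ A := hg.hA.le
  have b1 : kabs Fq (polyToK Fq (P.coeff 1)) ≤ (Fintype.card Fq : ℝ) ^ A := by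
    have : polyToK Fq (P.coeff 1) = (2 * polyToK Fq (P.coeff 2) * ξ + polyToK Fq (P.coeff 1)) -
      (2 * polyToK Fq (P.coeff 2)) * ξ := by ring
    rw [this]
    refine (hna.sub_le _ _).trans (max_le (hg.hB.le.trans (rle hBA)) (mulξ ?_))
    rw [hna.map_mul]
    exact (mul_le_of_le_one_left (hna.nonneg _) (kabs_two_le hna)).trans b2
  apply le_antisymm
  · refine Hpoly_le_two hg.deg ?_ b1 b2 (by positivity)
    have : polyToK Fq (P.coeff 0) = evalK Fq P ξ - (polyToK Fq (P.coeff 2) * ξ * ξ +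
      polyToK Fq (P.coeff 1) * ξ) := by rw [evalK_two hg.deg]; ring
    rw [this]
    refine (hna.sub_le _ _).trans (max_le (hg.hC.le.trans (rle hCA))
      ((hna.add_le _ _).trans (max_le (mulξ (mulξ b2)) (mulξ b1))))
  · rw [← hg.hA]; exact le_Hpoly P 2

lemma shiftL {ξ : K Fq} {P : Polynomial (Polynomial Fq)} (hdeg : P.natDegree ≤ 2) (y : L Fq) :
    evalL Fq P (toL Fq ξ + y) = toL Fq (polyToK Fq (P.coeff 2)) * y ^ 2 +
      toL Fq (2 * polyToK Fq (P.coeff 2) * ξ + polyToK Fq (P.coeff 1)) * y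
      + toL Fq (evalK Fq P ξ) := by
  rw [evalL_two hdeg, evalK_two hdeg]
  simp only [map_add, map_mul, map_pow, map_ofNat]; ring

lemma Good.root_ge {v : L Fq → ℝ} (hv : IsAbsExt Fq v) {ξ : K Fq} {f : Polynomial Fq}
    {P : Polynomial (Polynomial Fq)} {A B C : ℝ} (hg : Good ξ f P A B C) (hN : A + C < 2 * B)
    {α : L Fq} (hα : evalL Fq P α = 0) :
    (Fintype.card Fq : ℝ) ^ (C - B) ≤ v (toL Fq ξ - α) := by
  have hQ1 := card_gt (Fq := Fq)
  have hQ : (0 : ℝ) < Fintype.card Fq := by linarith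
  have hna := hv.na
  by_contra hlt
  push Not at hlt
  rw [hna.sub_comm] at hlt
  set y := α - toL Fq ξ with hy
  have h1 := shiftL (ξ := ξ) hg.deg y
  rw [show toL Fq ξ + y = α by rw [hy]; ring, hα] at h1
  have vA : v (toL Fq (polyToK Fq (P.coeff 2))) = _ := (hv.extends_kabs _).trans hg.hA
  have vB : v (toL Fq (2 * polyToK Fq (P.coeff 2) * ξ + polyToK Fq (P.coeff 1))) = _ :=
    (hv.extends_kabs _).trans hg.hB
  have vC : v (toL Fq (evalK Fq P ξ)) = _ := (hv.extends_kabs _).trans hg.hC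
  have h2 : v (toL Fq (polyToK Fq (P.coeff 2)) * y ^ 2 +
      toL Fq (2 * polyToK Fq (P.coeff 2) * ξ + polyToK Fq (P.coeff 1)) * y) <
      v (toL Fq (evalK Fq P ξ)) := by
    rw [vC]
    refine lt_of_le_of_lt (hna.add_le _ _) (max_lt ?_ ?_)
    · rw [hna.map_mul, hna.pow, vA]
      have : v y ^ 2 ≤ ((Fintype.card Fq : ℝ) ^ (C - B)) ^ 2 :=
        pow_le_pow_left₀ (hna.nonneg _) hlt.le 2
      refine lt_of_le_of_lt (mul_le_mul_of_nonneg_left this (by positivity)) ?_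
      rw [← Real.rpow_natCast, ← Real.rpow_mul hQ.le, ← Real.rpow_add hQ]
      apply Real.rpow_lt_rpow_of_exponent_lt hQ1
      push_cast; linarith
    · rw [hna.map_mul, vB]
      calc _ < (Fintype.card Fq : ℝ) ^ B * (Fintype.card Fq : ℝ) ^ (C - B) :=
            mul_lt_mul_of_pos_left hlt (by positivity)
        _ = _ := by rw [← Real.rpow_add hQ]; congr 1; ring
  have h3 := hna.add_eq h2
  rw [add_comm, ← h1, hna.zero, vC] at h3
  have := Real.rpow_pos_of_pos hQ C
  linarith

lemma Good.root_ex {v : L Fq → ℝ} (hv : IsAbsExt Fq v) {ξ : K Fq} {f : Polynomial Fq}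
    {P : Polynomial (Polynomial Fq)} {A B C : ℝ} (hg : Good ξ f P A B C) (hN : A + C < 2 * B) :
    ∃ α : L Fq, evalL Fq P α = 0 ∧ v (toL Fq ξ - α) = (Fintype.card Fq : ℝ) ^ (C - B) := by
  have hQ1 := card_gt (Fq := Fq)
  have hQ : (0 : ℝ) < Fintype.card Fq := by linarith
  have hna := hv.na
  have vA : v (toL Fq (polyToK Fq (P.coeff 2))) = _ := (hv.extends_kabs _).trans hg.hA
  have vB : v (toL Fq (2 * polyToK Fq (P.coeff 2) * ξ + polyToK Fq (P.coeff 1))) = _ :=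
    (hv.extends_kabs _).trans hg.hB
  have vC : v (toL Fq (evalK Fq P ξ)) = _ := (hv.extends_kabs _).trans hg.hC
  have hsh := shiftL (ξ := ξ) hg.deg
  set a2 := toL Fq (polyToK Fq (P.coeff 2)) with ha2
  set a1 := toL Fq (2 * polyToK Fq (P.coeff 2) * ξ + polyToK Fq (P.coeff 1)) with ha1
  set a0 := toL Fq (evalK Fq P ξ) with ha0
  have ne : a2 ≠ 0 := by
    intro h; rw [h, hna.zero] at vA
    have := Real.rpow_pos_of_pos hQ A
    linarith
  obtain ⟨y1, hy1⟩ : ∃ y1 : L Fq, a2 * y1 ^ 2 + a1 * y1 + a0 = 0 := by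
    obtain ⟨z, hz⟩ := IsAlgClosed.exists_root
      (Polynomial.C a2 * X ^ 2 + Polynomial.C a1 * X + Polynomial.C a0)
      (by rw [degree_quadratic ne]; norm_num)
    refine ⟨z, ?_⟩
    simpa [IsRoot] using hz
  set y2 := -(a1 / a2) - y1 with hy2
  have hs : a2 * (y1 + y2) = -a1 := by rw [hy2]; field_simp; ring
  have hp : a2 * (y1 * y2) = a0 := by
    linear_combination y1 * hs - hy1
  have hy2' : a2 * y2 ^ 2 + a1 * y2 + a0 = 0 := by
    linear_combination y2 * hs - hp
  -- big roots
  have big : ∀ y : L Fq, a2 * y ^ 2 + a1 * y + a0 = 0 → v y ≠ (Fintype.card Fq : ℝ) ^ (C - B) →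
      v y = (Fintype.card Fq : ℝ) ^ (B - A) := by
    intro y hy hne
    have hge : (Fintype.card Fq : ℝ) ^ (C - B) ≤ v y := by
      have := hg.root_ge hv hN (α := toL Fq ξ + y) (by rw [hsh]; exact hy)
      rwa [sub_add_cancel_left, hna.neg] at this
    have hgt := lt_of_le_of_ne hge (Ne.symm hne)
    have hvy : 0 < v y := lt_of_le_of_lt (by positivity) hgt
    have h1 : v (a1 * y) > v a0 := by
      rw [vC, hna.map_mul, vB]
      calc _ = (Fintype.card Fq : ℝ) ^ B * (Fintype.card Fq : ℝ) ^ (C - B) := by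
            rw [← Real.rpow_add hQ]; congr 1; ring
        _ < _ := mul_lt_mul_of_pos_left hgt (by positivity)
    have h2 := hna.add_eq h1
    have h3 : a1 * y + a0 = -(a2 * y ^ 2) := by linear_combination hy
    rw [h3, hna.neg, hna.map_mul, hna.map_mul, hna.pow, vA, vB] at h2
    have h4 : (Fintype.card Fq : ℝ) ^ A * v y = (Fintype.card Fq : ℝ) ^ B := by
      apply mul_right_cancel₀ hvy.ne'
      rw [← h2]; ring
    have h5 : (Fintype.card Fq : ℝ) ^ A * (Fintype.card Fq : ℝ) ^ (B - A) =
        (Fintype.card Fq : ℝ) ^ B := by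
      rw [← Real.rpow_add hQ]; congr 1; ring
    exact mul_left_cancel₀ (Real.rpow_pos_of_pos hQ A).ne' (h4.trans h5.symm)
  have fin : ∀ y : L Fq, a2 * y ^ 2 + a1 * y + a0 = 0 → v y = (Fintype.card Fq : ℝ) ^ (C - B) →
      ∃ α : L Fq, evalL Fq P α = 0 ∧ v (toL Fq ξ - α) = (Fintype.card Fq : ℝ) ^ (C - B) := by
    intro y hy hvy
    exact ⟨toL Fq ξ + y, by rw [hsh]; exact hy, by rw [sub_add_cancel_left, hna.neg, hvy]⟩
  by_cases c1 : v y1 = (Fintype.card Fq : ℝ) ^ (C - B)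
  · exact fin y1 hy1 c1
  by_cases c2 : v y2 = (Fintype.card Fq : ℝ) ^ (C - B)
  · exact fin y2 hy2' c2
  exfalso
  have e1 := big y1 hy1 c1
  have e2 := big y2 hy2' c2
  have e3 := congrArg v hp
  rw [hna.map_mul, hna.map_mul, e1, e2, vA, vC, ← Real.rpow_add hQ, ← Real.rpow_add hQ] at e3
  have e4 := (Real.rpow_le_rpow_left_iff hQ1).1 e3.le
  linarith

lemma eval_le_of_root {v : L Fq → ℝ} (hv : IsAbsExt Fq v) {ξ : K Fq} (hξ1 : kabs Fq ξ ≤ 1)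
    {P : Polynomial (Polynomial Fq)} (hdeg : P.natDegree ≤ 2) {α : L Fq} (hα : evalL Fq P α = 0)
    (h1 : v (toL Fq ξ - α) ≤ 1) :
    kabs Fq (evalK Fq P ξ) ≤ Hpoly Fq P * v (toL Fq ξ - α) := by
  have hna := hv.na
  have hnak := hv.nak
  rw [hna.sub_comm] at h1 ⊢
  set y := α - toL Fq ξ with hy
  have h2 := shiftL (ξ := ξ) hdeg y
  rw [show toL Fq ξ + y = α by rw [hy]; ring, hα] at h2
  have h3 : toL Fq (evalK Fq P ξ) = -((toL Fq (polyToK Fq (P.coeff 2)) * y +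
      toL Fq (2 * polyToK Fq (P.coeff 2) * ξ + polyToK Fq (P.coeff 1))) * y) := by
    linear_combination -h2
  rw [← hv.extends_kabs, h3, hna.neg, hna.map_mul]
  refine mul_le_mul_of_nonneg_right ((hna.add_le _ _).trans (max_le ?_ ?_)) (hna.nonneg _)
  · rw [hna.map_mul, hv.extends_kabs]
    exact (mul_le_of_le_one_right (hnak.nonneg _) h1).trans (le_Hpoly P 2)
  · rw [hv.extends_kabs]; exact shift_b_le hnak hξ1 P

end analysis


section minp
variable {Fq : Type} [Field Fq] [Fintype Fq]

lemma phi_inj : Function.Injective (φ Fq) := by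
  have := (toL_inj (Fq := Fq)).comp (polyToK_inj (Fq := Fq))
  simpa [φ] using this

lemma evalL_mul (P Q : Polynomial (Polynomial Fq)) (α : L Fq) :
    evalL Fq (P * Q) α = evalL Fq P α * evalL Fq Q α := eval₂_mul _ _

lemma exists_irr {α : L Fq} (P : Polynomial (Polynomial Fq)) :
    P ≠ 0 → evalL Fq P α = 0 → ∃ Q, Irreducible Q ∧ evalL Fq Q α = 0 := by
  refine UniqueFactorizationMonoid.induction_on_prime P ?_ ?_ ?_
  · intro h; exact absurd rfl h
  · intro x hx _ h
    exfalso
    obtain ⟨y, hy⟩ := hx.exists_right_inv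
    have h2 := evalL_mul x y α
    rw [hy, h, zero_mul] at h2
    simp [evalL] at h2
  · intro a p ha hp ih h0 h
    rw [evalL_mul, mul_eq_zero] at h
    rcases h with h | h
    · exact ⟨p, hp.irreducible, h⟩
    · exact ih ha h

lemma isAlgElem_of_root {α : L Fq} {P : Polynomial (Polynomial Fq)} (hP : P ≠ 0)
    (h : evalL Fq P α = 0) : IsAlgElem Fq α := by
  obtain ⟨Q, hQ, hQα⟩ := exists_irr P hP h
  have hpos : 0 < Q.natDegree := by
    by_contra h0
    have h0 : Q.natDegree = 0 := by omega
    rw [natDegree_eq_zero] at h0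
    obtain ⟨k, rfl⟩ := h0
    rw [evalL, eval₂_C] at hQα
    have : k = 0 := phi_inj (by rw [hQα, map_zero])
    exact hQ.ne_zero (by rw [this, map_zero])
  set u : Fq := Q.leadingCoeff.leadingCoeff with hu
  have hu0 : u ≠ 0 := by simp [hu, hQ.ne_zero]
  have hun : IsUnit (Polynomial.C (Polynomial.C u⁻¹)) :=
    (isUnit_C.2 (isUnit_C.2 (inv_ne_zero hu0).isUnit))
  have hirr : Irreducible (Polynomial.C (Polynomial.C u⁻¹) * Q) :=
    (irreducible_isUnit_mul hun).2 hQ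
  have hnd : (Polynomial.C (Polynomial.C u⁻¹) * Q).natDegree = Q.natDegree :=
    natDegree_C_mul (C_ne_zero.2 (inv_ne_zero hu0))
  refine ⟨Polynomial.C (Polynomial.C u⁻¹) * Q, by rw [hnd]; exact hpos, hirr, ?_, ?_, ?_⟩
  · exact hirr.isPrimitive (by rw [hnd]; omega)
  · rw [Monic, leadingCoeff_mul, leadingCoeff_mul, leadingCoeff_C, leadingCoeff_C]
    exact inv_mul_cancel₀ hu0
  · rw [evalL_mul, hQα, mul_zero]

lemma minPoly_spec {α : L Fq} (h : IsAlgElem Fq α) : IsMinPolyOf Fq (minPolyPrim Fq α) α := by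
  rw [minPolyPrim, dif_pos h]; exact h.choose_spec

lemma minPoly_dvd {α : L Fq} {P Q : Polynomial (Polynomial Fq)} (hQ : IsMinPolyOf Fq Q α)
    (h : evalL Fq P α = 0) : Q ∣ P := by
  obtain ⟨-, hirr, hprim, -, hQα⟩ := hQ
  apply hprim.dvd_of_fraction_map_dvd_fraction_map (K := FractionRing (Polynomial Fq))
  by_contra hnd
  have h1 := (hprim.irreducible_iff_irreducible_map_fraction_map
    (K := FractionRing (Polynomial Fq))).1 hirr
  have h2 := (h1.coprime_iff_not_dvd).2 hnd
  obtain ⟨x, y, hxy⟩ := h2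
  set g : FractionRing (Polynomial Fq) →+* L Fq := IsFractionRing.lift (phi_inj (Fq := Fq))
  have hg : g.comp (algebraMap (Polynomial Fq) (FractionRing (Polynomial Fq))) = φ Fq := by
    apply RingHom.ext
    intro z
    simp [g]
  have h3 := congrArg (eval₂ g α) hxy
  rw [eval₂_add, eval₂_mul, eval₂_mul, eval₂_map, eval₂_map, hg] at h3
  change eval₂ g α x * evalL Fq Q α + eval₂ g α y * evalL Fq P α = _ at h3
  rw [hQα, h] at h3
  simp at h3

lemma root_alg (hna : NA (kabs Fq)) {α : L Fq} {P : Polynomial (Polynomial Fq)}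
    (hdeg : P.natDegree ≤ 2)
    (h2 : P.coeff 2 ≠ 0) (hno : NoRoot P) (h : evalL Fq P α = 0) :
    IsAlgElem Fq α ∧ degAlg Fq α ≤ 2 ∧ 1 ≤ heightAlg Fq α ∧ heightAlg Fq α ≤ Hpoly Fq P := by
  have hP : P ≠ 0 := by rintro rfl; simp at h2
  have halg := isAlgElem_of_root hP h
  have hs := minPoly_spec halg
  have hd := minPoly_dvd hs h
  rw [degAlg, heightAlg]
  set Q := minPolyPrim Fq α
  have hQ0 := hs.2.1.ne_zero
  refine ⟨halg, (natDegree_le_of_dvd hd hP).trans hdeg, one_le_Hpoly hQ0, ?_⟩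
  obtain ⟨k, hk⟩ := hd
  have hk0 : k ≠ 0 := by rintro rfl; exact hP (by rw [hk, mul_zero])
  have hdd : Q.natDegree + k.natDegree ≤ 2 := by
    rw [← natDegree_mul hQ0 hk0, ← hk]; exact hdeg
  have hk00 : k.natDegree = 0 := by
    by_contra hkn
    have h0 := hs.1
    have q1 : Q.natDegree = 1 := by omega
    have k1 : k.natDegree = 1 := by omega
    have hq := eq_X_add_C_of_natDegree_le_one q1.le
    have hkk := eq_X_add_C_of_natDegree_le_one k1.le
    have hl : Q.coeff 1 ≠ 0 := by
      have := leadingCoeff_ne_zero.2 hQ0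
      rwa [leadingCoeff, q1] at this
    refine hno (-(Q.coeff 0)) (Q.coeff 1) hl ?_
    have e2 : P.coeff 2 = Q.coeff 1 * k.coeff 1 := by
      rw [hk, coeff_mul, Finset.Nat.sum_antidiagonal_eq_sum_range_succ_mk]
      simp [Finset.sum_range_succ, coeff_eq_zero_of_natDegree_lt (show Q.natDegree < 2 by omega),
        coeff_eq_zero_of_natDegree_lt (show k.natDegree < 2 by omega)]
    have e1 : P.coeff 1 = Q.coeff 1 * k.coeff 0 + Q.coeff 0 * k.coeff 1 := by
      rw [hk, coeff_mul, Finset.Nat.sum_antidiagonal_eq_sum_range_succ_mk]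
      simp [Finset.sum_range_succ]; ring
    have e0 : P.coeff 0 = Q.coeff 0 * k.coeff 0 := by
      rw [hk, mul_coeff_zero]
    rw [e2, e1, e0]; ring
  obtain ⟨z, rfl⟩ := natDegree_eq_zero.1 hk00
  have hz : z ≠ 0 := by rintro rfl; simp at hk0
  apply Hpoly_le
  intro i
  refine le_trans ?_ (le_Hpoly P i)
  rw [hk, coeff_mul_C, map_mul, hna.map_mul]
  exact le_mul_of_one_le_right (hna.nonneg _) (kabs_poly_ge_one hz)

lemma finite_roots (S : Set (Polynomial (Polynomial Fq))) (hS : S.Finite) :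
    {α : L Fq | IsAlgElem Fq α ∧ minPolyPrim Fq α ∈ S}.Finite := by
  classical
  have : {α : L Fq | IsAlgElem Fq α ∧ minPolyPrim Fq α ∈ S} ⊆
      ⋃ P ∈ S, (↑((P.map (φ Fq)).roots.toFinset) : Set (L Fq)) := by
    intro α ⟨h1, h2⟩
    simp only [Set.mem_iUnion]
    refine ⟨_, h2, ?_⟩
    have hs := minPoly_spec h1
    have : (minPolyPrim Fq α).map (φ Fq) ≠ 0 :=
      (Polynomial.map_ne_zero_iff phi_inj).2 hs.2.1.ne_zero
    simp only [Finset.mem_coe, Multiset.mem_toFinset, mem_roots this, IsRoot, eval_map]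
    exact hs.2.2.2.2
  exact (hS.biUnion fun _ _ => Finset.finite_toSet _).subset this

end minp

section combinatorics

lemma combi {T : Type} (a : ℕ → T) (b c d : T) (hbc : b ≠ c) (hbd : b ≠ d) (hcd : c ≠ d)
    (R0 R1 s : ℕ) (hR0 : 1 ≤ R0) (hs : 2 ≤ s) (hgap : R0 + 2 * s + 1 < R1)
    (hc0 : a R0 = c) (hc1 : a R1 = c)
    (hblkd : ∀ n m, R0 + 1 < n → n < R1 → 1 ≤ m → n = R0 + m * s → a n = d)
    (hblkb : ∀ n, R0 + 1 < n → n < R1 → (∀ m, 1 ≤ m → n ≠ R0 + m * s) → a n = b)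
    (hone : a (R0 + 1) = b ∨ a (R0 + 1) = d) :
    ∃ r, R0 ≤ r ∧ r ≤ R0 + 1 ∧ a r ≠ a (r + s) ∧
      (∀ i, r < i → i + s < R1 → a i = a (i + s)) ∧ a R1 ≠ a (R1 - s) ∧
      (∀ i, 1 ≤ i → i < s → a (R0 + s + i) = b) ∧ a (R0 + s + s) = d := by
  have hper : ∀ i, R0 + 1 < i → i + s < R1 → a i = a (i + s) := by
    intro i h1 h2
    by_cases h : ∃ m, 1 ≤ m ∧ i = R0 + m * s
    · obtain ⟨m, hm, rfl⟩ := h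
      rw [hblkd _ m h1 (by omega) hm rfl, hblkd _ (m + 1) (by omega) h2 (by omega) (by ring)]
    · push Not at h
      rw [hblkb i h1 (by omega) h, hblkb (i + s) (by omega) h2]
      intro m hm heq
      obtain ⟨k, rfl⟩ : ∃ k, m = k + 1 := ⟨m - 1, by omega⟩
      have h3 : i = R0 + k * s := by
        have : (k + 1) * s = k * s + s := by ring
        omega
      rcases Nat.eq_zero_or_pos k with rfl | hk
      · omega
      · exact h k hk h3
  have hRs : a R1 ≠ a (R1 - s) := by
    rw [hc1]
    by_cases h : ∃ m, 1 ≤ m ∧ R1 - s = R0 + m * s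
    · obtain ⟨m, hm, h⟩ := h
      rw [hblkd (R1 - s) m (by omega) (by omega) hm h]; exact hcd
    · push Not at h
      rw [hblkb (R1 - s) (by omega) (by omega) h]; exact hbc.symm
  have hbs : ∀ k i, k ≤ 1 → 1 ≤ i → i < s → R0 + 1 < R0 + k * s + i → a (R0 + k * s + i) = b := by
    intro k i hk h1 h2 h3
    have : k * s ≤ s := by nlinarith
    refine hblkb _ h3 (by omega) ?_
    intro m hm heq
    have h4 : k * s < m * s := by omega
    have h5 : m * s < (k + 1) * s := by
      have : (k + 1) * s = k * s + s := by ring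
      omega
    have := lt_of_mul_lt_mul_right h4 (Nat.zero_le _)
    have := lt_of_mul_lt_mul_right h5 (Nat.zero_le _)
    omega
  have hds : ∀ k, 1 ≤ k → k ≤ 2 → a (R0 + k * s) = d := by
    intro k h1 h2
    have : k * s ≤ 2 * s := Nat.mul_le_mul_right _ h2
    have : 1 * s ≤ k * s := Nat.mul_le_mul_right _ h1
    exact hblkd _ k (by omega) (by omega) h1 rfl
  have hd1 : a (R0 + s) = d := by have := hds 1 le_rfl (by norm_num); rwa [one_mul] at this
  have hd2 : a (R0 + s + s) = d := by
    have := hds 2 (by norm_num) le_rfl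
    rwa [show R0 + 2 * s = R0 + s + s by ring] at this
  have hbb : ∀ i, 1 ≤ i → i < s → a (R0 + s + i) = b := by
    intro i h1 h2
    have := hbs 1 i le_rfl h1 h2 (by omega)
    rwa [one_mul] at this
  have hb1 : a (R0 + 1 + s) = b := by
    have := hbb 1 le_rfl (by omega)
    rwa [show R0 + s + 1 = R0 + 1 + s by ring] at this
  rcases hone with h | h
  · refine ⟨R0, le_rfl, by omega, by rw [hc0, hd1]; exact hcd, ?_, hRs, hbb, hd2⟩
    intro i h1 h2
    rcases Nat.lt_or_ge (R0 + 1) i with h3 | h3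
    · exact hper i h3 h2
    · have : i = R0 + 1 := by omega
      subst this
      rw [h, hb1]
  · exact ⟨R0 + 1, by omega, le_rfl, by rw [h, hb1]; exact hbd.symm, hper, hRs, hbb, hd2⟩

/-- The block structure of the word, in natural numbers. -/
structure Blk {T : Type} (a : ℕ → T) (b c d : T) (R0 R1 s : ℕ) : Prop where
  c0 : a R0 = c
  c1 : a R1 = c
  blkd : ∀ n m, R0 + 1 < n → n < R1 → 1 ≤ m → n = R0 + m * s → a n = d
  blkb : ∀ n, R0 + 1 < n → n < R1 → (∀ m, 1 ≤ m → n ≠ R0 + m * s) → a n = b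
  one : a (R0 + 1) = b ∨ a (R0 + 1) = d

lemma Blk.count {T : Type} [DecidableEq T] {a : ℕ → T} {b c d : T} {R0 R1 s : ℕ}
    (h : Blk a b c d R0 R1 s)
    (Kn : ℕ) (hs : 1 ≤ s) (hK : R1 ≤ R0 + Kn * s) (n : ℕ) (hn : n ≤ R1) :
    ((Finset.Ioc R0 n).filter (fun i => a i ≠ b)).card ≤ Kn + 3 := by
  have hsub : (Finset.Ioc R0 n).filter (fun i => a i ≠ b) ⊆
      insert (R0 + 1) (insert R1 ((Finset.range (Kn + 1)).image (fun m => R0 + m * s))) := by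
    intro i hi
    simp only [Finset.mem_filter, Finset.mem_Ioc] at hi
    simp only [Finset.mem_insert, Finset.mem_image, Finset.mem_range]
    by_contra hcon
    push Not at hcon
    obtain ⟨h1, h2, h3⟩ := hcon
    refine hi.2 (h.blkb i (by omega) (by omega) ?_)
    intro m _ heq
    refine h3 m ?_ heq.symm
    have h4 : m * s ≤ Kn * s := by omega
    have := le_of_mul_le_mul_right h4 (by omega)
    omega
  refine (Finset.card_le_card hsub).trans ?_
  refine (Finset.card_insert_le _ _).trans ?_
  have h1 := Finset.card_insert_le R1 ((Finset.range (Kn + 1)).image (fun m => R0 + m * s))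
  have h2 := Finset.card_image_le (s := Finset.range (Kn + 1)) (f := fun m => R0 + m * s)
  simp only [Finset.card_range] at h2
  omega

/-- Extract block structure from the hypotheses of the theorem. -/
lemma mkBlk {T : Type} {a : ℕ → T} {b c d : T} {w η : ℝ} (hw : 25 ≤ w) (hη0 : 0 < η)
    (mi : ℕ → ℤ)
    (hmi : ∀ i : ℕ, 1 ≤ i →
      mi i = ⌊(((⌊w ^ (i + 1)⌋ - ⌊w ^ i - 1⌋ : ℤ)) : ℝ) / ((⌊η * w ^ i⌋ : ℤ) : ℝ)⌋)
    (hac : ∀ n : ℕ, 1 ≤ n → (∃ i : ℕ, (n : ℤ) = ⌊w ^ i⌋) → a n = c)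
    (had : ∀ n : ℕ, 1 ≤ n → (¬ ∃ i : ℕ, (n : ℤ) = ⌊w ^ i⌋) →
      (∃ j : ℕ, 1 ≤ j ∧ ∃ m : ℤ, 1 ≤ m ∧ m ≤ mi j ∧ (n : ℤ) = ⌊w ^ j⌋ + m * ⌊η * w ^ j⌋) →
      a n = d)
    (hab : ∀ n : ℕ, 1 ≤ n → (¬ ∃ i : ℕ, (n : ℤ) = ⌊w ^ i⌋) →
      (¬ ∃ j : ℕ, 1 ≤ j ∧ ∃ m : ℤ, 1 ≤ m ∧ m ≤ mi j ∧ (n : ℤ) = ⌊w ^ j⌋ + m * ⌊η * w ^ j⌋) →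
      a n = b)
    (j : ℕ) (hj : 1 ≤ j) (hs : 2 ≤ ⌊η * w ^ j⌋₊) :
    Blk a b c d ⌊w ^ j⌋₊ ⌊w ^ (j + 1)⌋₊ ⌊η * w ^ j⌋₊ := by
  have hw0 : 0 < w := by linarith
  have cR : ∀ i : ℕ, ((⌊w ^ i⌋₊ : ℕ) : ℤ) = ⌊w ^ i⌋ := fun i =>
    Int.natCast_floor_eq_floor (by positivity)
  have cS : ∀ i : ℕ, ((⌊η * w ^ i⌋₊ : ℕ) : ℤ) = ⌊η * w ^ i⌋ := fun i =>
    Int.natCast_floor_eq_floor (by positivity)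
  have R1 : ∀ i : ℕ, 1 ≤ ⌊w ^ i⌋₊ := fun i => by
    rw [Nat.one_le_floor_iff]; exact one_le_pow₀ (by linarith)
  have Rgap : ∀ i : ℕ, ⌊w ^ i⌋₊ + 2 ≤ ⌊w ^ (i + 1)⌋₊ := fun i => by
    rw [Nat.le_floor_iff (by positivity)]
    push_cast
    have h1 := Nat.floor_le (show 0 ≤ w ^ i by positivity)
    have h2 : 1 ≤ w ^ i := one_le_pow₀ (by linarith)
    rw [pow_succ]
    nlinarith
  have Rmono : StrictMono fun i => ⌊w ^ i⌋₊ := strictMono_nat_of_lt_succ fun i => by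
    have := Rgap i; omega
  have isC : ∀ n : ℕ, (∃ i : ℕ, (n : ℤ) = ⌊w ^ i⌋) ↔ ∃ i : ℕ, n = ⌊w ^ i⌋₊ := by
    intro n
    refine exists_congr fun i => ?_
    rw [← cR]; norm_cast
  have notC : ∀ n : ℕ, ⌊w ^ j⌋₊ < n → n < ⌊w ^ (j + 1)⌋₊ → ¬ ∃ i : ℕ, (n : ℤ) = ⌊w ^ i⌋ := by
    intro n h1 h2
    rw [isC]
    rintro ⟨i, rfl⟩
    have h3 := Rmono.lt_iff_lt.1 h1
    have h4 := Rmono.lt_iff_lt.1 h2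
    omega
  -- bound on overshoot
  have mS : ∀ k : ℕ, 1 ≤ k → ∀ m : ℤ, 1 ≤ m → m ≤ mi k →
      ⌊w ^ k⌋ + m * ⌊η * w ^ k⌋ ≤ ⌊w ^ (k + 1)⌋ + 1 := by
    intro k hk m h1 h2
    rw [hmi k hk] at h2
    have hS0 : (0 : ℤ) ≤ ⌊η * w ^ k⌋ := by rw [← cS]; positivity
    rcases hS0.eq_or_lt with h0 | h0
    · rw [← h0] at h2; simp at h2; omega
    · have h3 := Int.le_floor.1 h2
      have h4 : (0 : ℝ) < ((⌊η * w ^ k⌋ : ℤ) : ℝ) := by exact_mod_cast h0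
      rw [le_div_iff₀ h4] at h3
      have h5 : m * ⌊η * w ^ k⌋ ≤ ⌊w ^ (k + 1)⌋ - ⌊w ^ k - 1⌋ := by exact_mod_cast h3
      rw [Int.floor_sub_one] at h5
      omega
  have miS : ∀ m : ℕ, ⌊w ^ j⌋₊ + m * ⌊η * w ^ j⌋₊ < ⌊w ^ (j + 1)⌋₊ → (m : ℤ) ≤ mi j := by
    intro m h
    rw [hmi j hj, Int.le_floor]
    have h4 : (0 : ℝ) < ((⌊η * w ^ j⌋ : ℤ) : ℝ) := by
      rw [← cS]; exact_mod_cast (show 0 < ⌊η * w ^ j⌋₊ by omega)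
    rw [le_div_iff₀ h4]
    rw [Int.floor_sub_one, ← cS, ← cR, ← cR]
    have : (⌊w ^ j⌋₊ : ℤ) + m * ⌊η * w ^ j⌋₊ < ⌊w ^ (j + 1)⌋₊ := by exact_mod_cast h
    have : (m : ℤ) * ⌊η * w ^ j⌋₊ ≤ (⌊w ^ (j + 1)⌋₊ : ℤ) - (⌊w ^ j⌋₊ - 1) := by linarith
    exact_mod_cast this
  have isD : ∀ n : ℕ, ⌊w ^ j⌋₊ + 1 < n → n < ⌊w ^ (j + 1)⌋₊ →
      ((∃ k : ℕ, 1 ≤ k ∧ ∃ m : ℤ, 1 ≤ m ∧ m ≤ mi k ∧ (n : ℤ) = ⌊w ^ k⌋ + m * ⌊η * w ^ k⌋) ↔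
        ∃ m : ℕ, 1 ≤ m ∧ n = ⌊w ^ j⌋₊ + m * ⌊η * w ^ j⌋₊) := by
    intro n h1 h2
    constructor
    · rintro ⟨k, hk, m, hm1, hm2, heq⟩
      have h3 := mS k hk m hm1 hm2
      rw [← heq, ← cR] at h3
      have h4 : n ≤ ⌊w ^ (k + 1)⌋₊ + 1 := by exact_mod_cast h3
      have h5 : j ≤ k := by
        by_contra hlt
        have := Rmono.monotone (show k + 1 ≤ j by omega)
        omega
      have h6 : k ≤ j := by
        by_contra hlt
        have h7 := Rmono.monotone (show j + 1 ≤ k by omega)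
        have h8 : (⌊w ^ k⌋₊ : ℤ) ≤ n := by
          rw [heq, cR, ← cS]
          have : 0 ≤ m * (⌊η * w ^ k⌋₊ : ℤ) := mul_nonneg (by omega) (by positivity)
          linarith
        have : ⌊w ^ k⌋₊ ≤ n := by exact_mod_cast h8
        omega
      have : k = j := by omega
      subst this
      obtain ⟨m', rfl⟩ := Int.eq_ofNat_of_zero_le (show 0 ≤ m by omega)
      refine ⟨m', by exact_mod_cast hm1, ?_⟩
      rw [← cR, ← cS] at heq
      exact_mod_cast heq
    · rintro ⟨m, hm, rfl⟩
      refine ⟨j, hj, m, by exact_mod_cast hm, miS m h2, ?_⟩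
      rw [← cR, ← cS]; push_cast; ring
  refine ⟨hac _ (R1 _) ⟨j, cR j⟩, hac _ (R1 _) ⟨j + 1, cR _⟩, ?_, ?_, ?_⟩
  · intro n m h1 h2 hm heq
    exact had n (by omega) (notC n (by omega) h2) ((isD n h1 h2).2 ⟨m, hm, heq⟩)
  · intro n h1 h2 hm
    refine hab n (by omega) (notC n (by omega) h2) ?_
    rw [isD n h1 h2]
    rintro ⟨m, h3, h4⟩
    exact hm m h3 h4
  · have h2 := Rgap j
    have hC := notC (⌊w ^ j⌋₊ + 1) (by omega) (by omega)
    by_cases h : (∃ k : ℕ, 1 ≤ k ∧ ∃ m : ℤ, 1 ≤ m ∧ m ≤ mi k ∧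
      ((⌊w ^ j⌋₊ + 1 : ℕ) : ℤ) = ⌊w ^ k⌋ + m * ⌊η * w ^ k⌋)
    · exact Or.inr (had _ (by omega) hC h)
    · exact Or.inl (hab _ (by omega) hC h)

end combinatorics

section degrees
variable {Fq : Type} [Field Fq] [Fintype Fq]

lemma delta_count [DecidableEq (Polynomial Fq)] {a : ℕ → Polynomial Fq}
    (ha : ∀ n, 1 ≤ n → 1 ≤ (a n).natDegree) {D : ℕ}
    (hD : ∀ n, 1 ≤ n → (a n).natDegree ≤ D) {b : Polynomial Fq} (hbD : b.natDegree ≤ D)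
    (m n : ℕ) (hmn : m ≤ n) :
    |((eD a n : ℝ) - b.natDegree * n) - ((eD a m : ℝ) - b.natDegree * m)| ≤
      D * ((Finset.Ioc m n).filter (fun i => a i ≠ b)).card := by
  induction n, hmn using Nat.le_induction with
  | base => simp
  | succ n hmn ih =>
    have h1 : Finset.Ioc m (n + 1) = insert (n + 1) (Finset.Ioc m n) := by
      ext i; simp only [Finset.mem_Ioc, Finset.mem_insert]; omega
    rw [h1, Finset.filter_insert, eD_succ ha]
    by_cases h : a (n + 1) = b
    · rw [if_neg (not_not.2 h), h]
      push_cast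
      rw [abs_le] at ih ⊢
      constructor <;> linarith [ih.1, ih.2]
    · rw [if_pos h, Finset.card_insert_of_notMem (by simp)]
      push_cast
      have h2 : ((a (n + 1)).natDegree : ℝ) ≤ D := by exact_mod_cast hD (n + 1) (by omega)
      have h3 : (b.natDegree : ℝ) ≤ D := by exact_mod_cast hbD
      have h4 : (0 : ℝ) ≤ (a (n + 1)).natDegree := by positivity
      have h5 : (0 : ℝ) ≤ b.natDegree := by positivity
      rw [abs_le] at ih ⊢
      constructor <;> linarith [ih.1, ih.2]

lemma delta_bound {a : ℕ → Polynomial Fq}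
    (ha : ∀ n, 1 ≤ n → 1 ≤ (a n).natDegree) {D : ℕ}
    (hD : ∀ n, 1 ≤ n → (a n).natDegree ≤ D) {b c d : Polynomial Fq} (hbD : b.natDegree ≤ D)
    (R S : ℕ → ℕ) (hR : StrictMono R) (hR1 : ∀ j, 1 ≤ R j) (j0 Kn : ℕ)
    (hblk : ∀ j, j0 ≤ j → Blk a b c d (R j) (R (j + 1)) (S j) ∧ 1 ≤ S j ∧
      R (j + 1) ≤ R j + Kn * S j) :
    ∃ c0 c1 : ℝ, 0 ≤ c0 ∧ 0 ≤ c1 ∧ ∀ j, j0 ≤ j → ∀ n, R j ≤ n + 1 → n ≤ R (j + 1) →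
      |(eD a n : ℝ) - b.natDegree * n| ≤ c0 + c1 * j := by
  classical
  set E : ℝ := D * (Kn + 3)
  set Δ : ℕ → ℝ := fun n => (eD a n : ℝ) - b.natDegree * n with hΔ
  have step : ∀ j, j0 ≤ j → ∀ n, R j ≤ n → n ≤ R (j + 1) → |Δ n - Δ (R j)| ≤ E := by
    intro j hj n h1 h2
    refine (delta_count ha hD hbD (R j) n h1).trans ?_
    obtain ⟨h3, h4, h5⟩ := hblk j hj
    have := h3.count Kn h4 h5 n h2
    have : (((Finset.Ioc (R j) n).filter (fun i => a i ≠ b)).card : ℝ) ≤ Kn + 3 := by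
      exact_mod_cast this
    exact mul_le_mul_of_nonneg_left this (by positivity)
  have hE : 0 ≤ E := by positivity
  have base : ∀ j, j0 ≤ j → |Δ (R j)| ≤ |Δ (R j0)| + E * j := by
    intro j hj
    induction j, hj using Nat.le_induction with
    | base => nlinarith [show (0 : ℝ) ≤ E * j0 by positivity]
    | succ j hj ih =>
      have h1 := step j hj (R (j + 1)) (hR.monotone (by omega)) le_rfl
      have h2 : |Δ (R (j + 1))| ≤ |Δ (R j)| + |Δ (R (j + 1)) - Δ (R j)| := by
        have := abs_add_le (Δ (R j)) (Δ (R (j + 1)) - Δ (R j))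
        rwa [add_sub_cancel] at this
      push_cast
      linarith
  refine ⟨|Δ (R j0)| + E + D, E, by positivity, hE, ?_⟩
  intro j hj n h1 h2
  change |Δ n| ≤ _
  have hb := base j hj
  rcases Nat.lt_or_ge n (R j) with h3 | h3
  · have h4 : R j = n + 1 := by omega
    have h5 := delta_count ha hD hbD n (n + 1) (by omega)
    have h6 : (((Finset.Ioc n (n + 1)).filter (fun i => a i ≠ b)).card : ℝ) ≤ 1 := by
      have := Finset.card_filter_le (Finset.Ioc n (n + 1)) (fun i => a i ≠ b)
      simp only [Nat.card_Ioc] at this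
      exact_mod_cast this.trans (by omega)
    have h7 : |Δ (n + 1) - Δ n| ≤ D := by
      refine h5.trans ?_
      nlinarith [show (0 : ℝ) ≤ D by positivity]
    rw [← h4] at h7
    have h8 : |Δ n| ≤ |Δ (R j)| + |Δ (R j) - Δ n| := by
      have := abs_sub (Δ (R j)) (Δ (R j) - Δ n)
      rwa [sub_sub_cancel] at this
    linarith
  · have h7 := step j hj n h3 h2
    have h8 : |Δ n| ≤ |Δ (R j)| + |Δ n - Δ (R j)| := by
      have := abs_add_le (Δ (R j)) (Δ n - Δ (R j))
      rwa [add_sub_cancel] at this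
    linarith [show (0 : ℝ) ≤ D by positivity]

lemma eta_lt {w η : ℝ} (hw : 25 ≤ w) (hη1 : η < Real.sqrt w / 4) : η < w / 20 := by
  have h1 : 5 ≤ Real.sqrt w := by
    rw [show (5 : ℝ) = Real.sqrt 25 by rw [show (25 : ℝ) = 5 ^ 2 by norm_num]; simp]
    exact Real.sqrt_le_sqrt hw
  have h2 := Real.mul_self_sqrt (show 0 ≤ w by linarith)
  nlinarith

set_option maxHeartbeats 1000000 in
lemma family (hna : NA (kabs Fq)) (w η : ℝ)
    (hw : 25 ≤ w) (hη0 : 0 < η) (hη1 : η < Real.sqrt w / 4)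
    (b c d : Polynomial Fq) (hbc : b ≠ c) (hbd : b ≠ d) (hcd : c ≠ d)
    (mi : ℕ → ℤ)
    (hmi : ∀ i : ℕ, 1 ≤ i →
      mi i = ⌊(((⌊w ^ (i + 1)⌋ - ⌊w ^ i - 1⌋ : ℤ)) : ℝ) / ((⌊η * w ^ i⌋ : ℤ) : ℝ)⌋)
    (a : ℕ → Polynomial Fq)
    (hac : ∀ n : ℕ, 1 ≤ n → (∃ i : ℕ, (n : ℤ) = ⌊w ^ i⌋) → a n = c)
    (had : ∀ n : ℕ, 1 ≤ n → (¬ ∃ i : ℕ, (n : ℤ) = ⌊w ^ i⌋) →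
      (∃ j : ℕ, 1 ≤ j ∧ ∃ m : ℤ, 1 ≤ m ∧ m ≤ mi j ∧ (n : ℤ) = ⌊w ^ j⌋ + m * ⌊η * w ^ j⌋) →
      a n = d)
    (hab : ∀ n : ℕ, 1 ≤ n → (¬ ∃ i : ℕ, (n : ℤ) = ⌊w ^ i⌋) →
      (¬ ∃ j : ℕ, 1 ≤ j ∧ ∃ m : ℤ, 1 ≤ m ∧ m ≤ mi j ∧ (n : ℤ) = ⌊w ^ j⌋ + m * ⌊η * w ^ j⌋) →
      a n = b)
    {D : ℕ} (hD : ∀ n, (a n).natDegree ≤ D) (hbD : b.natDegree ≤ D)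
    (ξ : K Fq) (hξ : IsCFOf Fq ξ a) :
    ∃ (c0 c1 : ℝ) (j0 : ℕ), ∀ j, j0 ≤ j → ∃ P A B C, Good ξ (b - d) P A B C ∧
      |A - b.natDegree * (2 + η) * w ^ j| ≤ c0 + c1 * j ∧
      |B - b.natDegree * η * w ^ j| ≤ c0 + c1 * j ∧
      |C + b.natDegree * (2 * w - η) * w ^ j| ≤ c0 + c1 * j := by
  have hw0 : 0 < w := by linarith
  have hη2 := eta_lt hw hη1
  set R : ℕ → ℕ := fun j => ⌊w ^ j⌋₊ with hRdef
  set S : ℕ → ℕ := fun j => ⌊η * w ^ j⌋₊ with hSdef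
  have R1 : ∀ i : ℕ, 1 ≤ R i := fun i => by
    rw [hRdef]; dsimp only
    rw [Nat.one_le_floor_iff]; exact one_le_pow₀ (by linarith)
  have Rle : ∀ j, (R j : ℝ) ≤ w ^ j := fun j => Nat.floor_le (by positivity)
  have Rgt : ∀ j, w ^ j < R j + 1 := fun j => Nat.lt_floor_add_one _
  have Sle : ∀ j, (S j : ℝ) ≤ η * w ^ j := fun j => Nat.floor_le (by positivity)
  have Sgt : ∀ j, η * w ^ j < S j + 1 := fun j => Nat.lt_floor_add_one _
  have Rmono : StrictMono R := strictMono_nat_of_lt_succ fun i => by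
    have h1 := Rle i
    have h2 := Rgt (i + 1)
    have h3 : 1 ≤ w ^ i := one_le_pow₀ (by linarith)
    rw [pow_succ] at h2
    have : (R i : ℝ) < R (i + 1) := by nlinarith
    exact_mod_cast this
  obtain ⟨Kn, hKn⟩ := exists_nat_ge (2 * w / η)
  rw [div_le_iff₀ hη0] at hKn
  obtain ⟨j1, hj1⟩ : ∃ j1 : ℕ, ∀ j, j1 ≤ j → 3 / η ≤ w ^ j :=
    eventually_atTop.1 ((tendsto_pow_atTop_atTop_of_one_lt (by linarith : 1 < w)).eventually_ge_atTop _)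
  have key : ∀ j, j1 + 1 ≤ j → 2 ≤ S j ∧ R j + 2 * S j + 1 < R (j + 1) ∧
      R (j + 1) ≤ R j + Kn * S j := by
    intro j hj
    have h1 := hj1 j (by omega)
    rw [div_le_iff₀ hη0] at h1
    have h2 : w ≤ w ^ j := le_self_pow₀ (by linarith) (by omega)
    have e1 := Rle j
    have e2 := Rgt j
    have e3 := Rle (j + 1)
    have e4 := Rgt (j + 1)
    have e5 := Sle j
    have e6 := Sgt j
    rw [pow_succ] at e3 e4
    set x := w ^ j
    refine ⟨?_, ?_, ?_⟩
    · have : (2 : ℝ) < (S j : ℝ) + 1 := by linarith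
      have : 2 < S j + 1 := by exact_mod_cast this
      omega
    · have : (R j : ℝ) + 2 * S j + 1 < R (j + 1) := by
        have : η * x ≤ w / 20 * x := by gcongr
        nlinarith
      exact_mod_cast this
    · have : (R (j + 1) : ℝ) ≤ R j + Kn * S j := by
        have h3 : (0 : ℝ) ≤ Kn := by positivity
        have h4 : (Kn : ℝ) * (η * x / 2) ≤ Kn * S j := by
          apply mul_le_mul_of_nonneg_left _ h3
          linarith
        nlinarith
      exact_mod_cast this
  have blk : ∀ j, j1 + 1 ≤ j → Blk a b c d (R j) (R (j + 1)) (S j) := fun j hj =>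
    mkBlk hw hη0 mi hmi hac had hab j (by omega) (key j hj).1
  obtain ⟨c0, c1, hc0, hc1, hbound⟩ := delta_bound hξ.1 (fun n _ => hD n) hbD R S Rmono R1 (j1 + 1) Kn
    (fun j hj => ⟨blk j hj, by have := (key j hj).1; omega, (key j hj).2.2⟩)
  refine ⟨D + 2 * (c0 + 4 * b.natDegree), 2 * c1, j1 + 1, ?_⟩
  intro j hj
  obtain ⟨k1, k2, k3⟩ := key j hj
  have B := blk j hj
  obtain ⟨r, r1, r2, r3, r4, r5, r6, r7⟩ := combi a b c d hbc hbd hcd (R j) (R (j + 1)) (S j)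
    (R1 j) k1 k2 B.c0 B.c1 B.blkd B.blkb B.one
  have hg := good_PP hna hξ b d r (S j) (R (j + 1)) (R j + S j) k1 (by have := R1 j; omega) r3
    (by omega) r4 r5 (by omega) (by omega) r6 r7
  have hR1 := R1 j
  have app : ∀ (n : ℕ) (x : ℝ), R j ≤ n + 1 → n ≤ R (j + 1) → |(n : ℝ) - x| ≤ 4 →
      |(eD a n : ℝ) - b.natDegree * x| ≤ c0 + 4 * b.natDegree + c1 * j := by
    intro n x h1 h2 h3
    have h4 := hbound j hj n h1 h2
    have h5 : |(b.natDegree : ℝ) * (n - x)| ≤ 4 * b.natDegree := by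
      rw [abs_mul, abs_of_nonneg (by positivity)]
      nlinarith [show (0 : ℝ) ≤ b.natDegree by positivity]
    have := abs_add_le ((eD a n : ℝ) - b.natDegree * n) ((b.natDegree : ℝ) * (n - x))
    rw [show (eD a n : ℝ) - b.natDegree * n + (b.natDegree : ℝ) * (n - x) =
      (eD a n : ℝ) - b.natDegree * x by ring] at this
    linarith
  have e1 := Rle j
  have e2 := Rgt j
  have e3 := Rle (j + 1)
  have e4 := Rgt (j + 1)
  have e5 := Sle j
  have e6 := Sgt j
  rw [pow_succ] at e3 e4
  have f1 : (R j : ℝ) ≤ r := by exact_mod_cast r1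
  have f2 : (r : ℝ) ≤ R j + 1 := by exact_mod_cast r2
  set x := w ^ j with hx
  have dg : ∀ m n : ℕ, 0 ≤ ((a m - a n).natDegree : ℝ) ∧ ((a m - a n).natDegree : ℝ) ≤ D := by
    intro m n
    refine ⟨by positivity, ?_⟩
    have := (natDegree_sub_le (a m) (a n)).trans (max_le (hD m) (hD n))
    exact_mod_cast this
  have c_r : ((r - 1 : ℕ) : ℝ) = r - 1 := by rw [Nat.cast_sub (by omega)]; simp
  have c_rs : ((r + S j - 1 : ℕ) : ℝ) = r + S j - 1 := by rw [Nat.cast_sub (by omega)]; simp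
  have c_R : ((R (j + 1) - S j : ℕ) : ℝ) = R (j + 1) - S j := Nat.cast_sub (by omega)
  have q1 := app (r - 1) x (by omega) (by omega) (by rw [c_r, abs_le]; constructor <;> linarith)
  have q2 := app (r + S j - 1) (x + η * x) (by omega) (by omega)
    (by rw [c_rs, abs_le]; constructor <;> linarith)
  have q3 := app (r + S j) (x + η * x) (by omega) (by omega)
    (by push_cast; rw [abs_le]; constructor <;> linarith)
  have q4 := app r x (by omega) (by omega) (by rw [abs_le]; constructor <;> linarith)
  have q5 := app (R (j + 1)) (x * w) (by omega) (by omega)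
    (by rw [abs_le]; constructor <;> linarith)
  have q6 := app (R (j + 1) - S j) (x * w - η * x) (by omega) (by omega)
    (by rw [c_R, abs_le]; constructor <;> linarith)
  have d1 := dg (r + S j) r
  have d2 := dg (R (j + 1)) (R (j + 1) - S j)
  rw [abs_le] at q1 q2 q3 q4 q5 q6
  obtain ⟨q1, q1'⟩ := q1
  obtain ⟨q2, q2'⟩ := q2
  obtain ⟨q3, q3'⟩ := q3
  obtain ⟨q4, q4'⟩ := q4
  obtain ⟨q5, q5'⟩ := q5
  obtain ⟨q6, q6'⟩ := q6
  obtain ⟨d1, d1'⟩ := d1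
  obtain ⟨d2, d2'⟩ := d2
  have hD0 : (0 : ℝ) ≤ D := by positivity
  refine ⟨_, _, _, _, hg, ?_, ?_, ?_⟩
  · rw [abs_le]
    constructor <;> linarith
  · rw [abs_le]
    constructor <;> linarith
  · rw [abs_le]
    constructor <;> linarith

end degrees

section final
variable {Fq : Type} [Field Fq] [Fintype Fq]

structure Fam (ξ : K Fq) (f : Polynomial Fq) (w η : ℝ) (P : ℕ → Polynomial (Polynomial Fq))
    (A B C S : ℕ → ℝ) : Prop where
  good : ∀ k, Good ξ f (P k) (A k) (B k) (C k)
  Spos : ∀ k, 0 < S k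
  Stop : Tendsto S atTop atTop
  Ssucc : ∀ k, S (k + 1) = w * S k
  tA : Tendsto (fun k => A k / S k) atTop (nhds (2 + η))
  tB : Tendsto (fun k => B k / S k) atTop (nhds η)
  tC : Tendsto (fun k => C k / S k) atTop (nhds (-(2 * w - η)))

lemma tends_of_bound {w β c0 c1 l : ℝ} (hw : 25 ≤ w) (hβ : 0 < β) (j0 : ℕ) (A : ℕ → ℝ)
    (h : ∀ k, |A k - l * (β * w ^ (j0 + k))| ≤ c0 + c1 * (j0 + k : ℕ)) :
    Tendsto (fun k => A k / (β * w ^ (j0 + k))) atTop (nhds l) := by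
  have hw0 : 0 < w := by linarith
  have z1 : Tendsto (fun j : ℕ => (c0 + c1 * j) / (β * w ^ j)) atTop (nhds 0) := by
    have t1 : Tendsto (fun j : ℕ => (j : ℝ) ^ 1 / w ^ j) atTop (nhds 0) :=
      tendsto_pow_const_div_const_pow_of_one_lt 1 (by linarith)
    have t0 : Tendsto (fun j : ℕ => (j : ℝ) ^ 0 / w ^ j) atTop (nhds 0) :=
      tendsto_pow_const_div_const_pow_of_one_lt 0 (by linarith)
    have := (t0.const_mul (c0 / β)).add (t1.const_mul (c1 / β))
    simp only [mul_zero, add_zero] at this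
    refine this.congr fun j => ?_
    field_simp
    try ring
  have z2 : Tendsto (fun k : ℕ => (c0 + c1 * (j0 + k : ℕ)) / (β * w ^ (j0 + k))) atTop (nhds 0) := by
    have := z1.comp (tendsto_add_atTop_nat j0)
    refine this.congr fun k => ?_
    simp only [Function.comp, add_comm k j0]
  rw [tendsto_iff_norm_sub_tendsto_zero]
  refine squeeze_zero (fun _ => norm_nonneg _) (fun k => ?_) z2
  have hp : 0 < β * w ^ (j0 + k) := by positivity
  rw [Real.norm_eq_abs, le_div_iff₀ hp]
  calc _ = |A k / (β * w ^ (j0 + k)) - l| * |β * w ^ (j0 + k)| := by rw [abs_of_pos hp]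
    _ = |A k - l * (β * w ^ (j0 + k))| := by
      rw [← abs_mul, sub_mul, div_mul_cancel₀ _ hp.ne']
    _ ≤ _ := h k

lemma fam_of_family {w η : ℝ} (hw : 25 ≤ w) {b f : Polynomial Fq} (hb : 1 ≤ b.natDegree)
    {ξ : K Fq}
    (h : ∃ (c0 c1 : ℝ) (j0 : ℕ), ∀ j, j0 ≤ j → ∃ P A B C, Good ξ f P A B C ∧
      |A - b.natDegree * (2 + η) * w ^ j| ≤ c0 + c1 * j ∧
      |B - b.natDegree * η * w ^ j| ≤ c0 + c1 * j ∧
      |C + b.natDegree * (2 * w - η) * w ^ j| ≤ c0 + c1 * j) :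
    ∃ P A B C S, Fam ξ f w η P A B C S := by
  obtain ⟨c0, c1, j0, h⟩ := h
  have h' := fun k => h (j0 + k) (by omega)
  choose P A B C hg hA hB hC using h'
  have hβ : (0 : ℝ) < b.natDegree := by exact_mod_cast hb
  have hw0 : 0 < w := by linarith
  refine ⟨P, A, B, C, fun k => b.natDegree * w ^ (j0 + k), hg, fun k => by positivity, ?_, ?_,
    tends_of_bound hw hβ j0 A (c0 := c0) (c1 := c1) fun k => ?_,
    tends_of_bound hw hβ j0 B (c0 := c0) (c1 := c1) fun k => ?_,
    tends_of_bound hw hβ j0 C (c0 := c0) (c1 := c1) fun k => ?_⟩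
  · have h1 := (tendsto_pow_atTop_atTop_of_one_lt (by linarith : 1 < w)).comp
      (tendsto_add_atTop_nat j0)
    refine (h1.const_mul_atTop hβ).congr fun k => ?_
    simp only [Function.comp, add_comm k j0]
  · intro k; rw [← add_assoc, pow_succ]; ring
  · refine le_of_eq_of_le ?_ (hA k); congr 1; ring
  · refine le_of_eq_of_le ?_ (hB k); congr 1; ring
  · refine le_of_eq_of_le ?_ (hC k); congr 1; ring

variable {ξ : K Fq} {f : Polynomial Fq} {w η : ℝ} {P : ℕ → Polynomial (Polynomial Fq)}
    {A B C S : ℕ → ℝ}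

lemma Fam.ev (h : Fam ξ f w η P A B C S) (x y z G : ℝ)
    (hlt : x * (2 + η) + y * η - z * (2 * w - η) < 0) :
    ∀ᶠ k in atTop, x * A k + y * B k + z * C k + G < 0 := by
  have t0 : Tendsto (fun k => G / S k) atTop (nhds 0) := h.Stop.const_div_atTop G
  have t := (((h.tA.const_mul x).add (h.tB.const_mul y)).add (h.tC.const_mul z)).add t0
  have := t.eventually_lt_const (show _ < (0 : ℝ) by linarith)
  filter_upwards [this] with k hk
  have hS := h.Spos k
  have e : x * (A k / S k) + y * (B k / S k) + z * (C k / S k) + G / S k =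
    (x * A k + y * B k + z * C k + G) / S k := by ring
  rw [e, div_lt_iff₀ hS, zero_mul] at hk
  exact hk

lemma Fam.ev2 (h : Fam ξ f w η P A B C S) (hw : 25 ≤ w) (x : ℝ)
    (hlt : w * (2 + 2 * η) + x * (2 + 2 * η - 2 * w) < 0) :
    ∀ᶠ k in atTop, A (k + 1) + B (k + 1) + x * (A k + C k) < 0 := by
  have t1 := ((h.tA.add h.tB).comp (tendsto_add_atTop_nat 1)).const_mul w
  have t := t1.add ((h.tA.add h.tC).const_mul x)
  have := t.eventually_lt_const (show _ < (0 : ℝ) by linarith)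
  filter_upwards [this] with k hk
  have hS := h.Spos k
  simp only [Function.comp, h.Ssucc k] at hk
  have e : w * (A (k + 1) / (w * S k) + B (k + 1) / (w * S k)) + x * (A k / S k + C k / S k) =
    (A (k + 1) + B (k + 1) + x * (A k + C k)) / S k := by
    have : w ≠ 0 := by linarith
    field_simp
  rw [e, div_lt_iff₀ hS, zero_mul] at hk
  exact hk

/-- Basic facts valid for all large indices. -/
structure Facts (P : ℕ → Polynomial (Polynomial Fq)) (A B C : ℕ → ℝ) (x1 : ℝ) (k : ℕ) : Prop where
  B0 : 0 ≤ B k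
  BA : B k ≤ A k
  CA : C k ≤ A k
  CB : C k ≤ B k
  N : A k + C k < 2 * B k
  no : NoRoot (P k)
  nxt : A (k + 1) + B (k + 1) < (x1 - 1) * (-(A k + C k) / 2)

lemma num_ineq (hw : 25 ≤ w) (hη0 : 0 < η) (hη1 : η < Real.sqrt w / 4) :
    w * (2 + 2 * η) + (((2 * w - 2 - η) / (2 + η) - 1) / 2) * (2 + 2 * η - 2 * w) < 0 := by
  have h1 := eta_lt hw hη1
  have h2 : η * η ≤ w / 16 := by
    have := Real.mul_self_sqrt (show 0 ≤ w by linarith)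
    nlinarith
  have h3 : w * ((1 + η) * (2 + η)) < (w - 2 - η) * (w - 1 - η) := by
    have h4 : w * ((1 + η) * (2 + η)) ≤ w * (2 + 3 * (w / 20) + w / 16) :=
      mul_le_mul_of_nonneg_left (by linarith) (by linarith)
    have h5 : (w - 2 - w / 20) * (w - 1 - w / 20) ≤ (w - 2 - η) * (w - 1 - η) :=
      mul_le_mul (by linarith) (by linarith) (by linarith) (by linarith)
    nlinarith
  have e : w * (2 + 2 * η) + (((2 * w - 2 - η) / (2 + η) - 1) / 2) * (2 + 2 * η - 2 * w) =
      2 * (w * ((1 + η) * (2 + η)) - (w - 2 - η) * (w - 1 - η)) / (2 + η) := by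
    have : 2 + η ≠ 0 := by linarith
    field_simp
    ring
  rw [e]
  exact div_neg_of_neg_of_pos (by linarith) (by linarith)

lemma Fam.facts (h : Fam ξ f w η P A B C S) (hna : NA (kabs Fq)) {a : ℕ → Polynomial Fq}
    (hξ : IsCFOf Fq ξ a) {D : ℕ} (hD : ∀ n, 1 ≤ n → (a n).natDegree ≤ D)
    (hw : 25 ≤ w) (hη0 : 0 < η) (hη1 : η < Real.sqrt w / 4) :
    ∀ᶠ k in atTop, Facts P A B C ((2 * w - 2 - η) / (2 + η)) k := by
  have h1 := eta_lt hw hη1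
  filter_upwards [h.ev 0 (-1) 0 0 (by linarith), h.ev (-1) 1 0 0 (by linarith),
    h.ev (-1) 0 1 0 (by linarith), h.ev 0 (-1) 1 0 (by linarith), h.ev 1 (-2) 1 0 (by linarith),
    h.ev 1 0 1 (2 * D) (by linarith), h.ev2 hw _ (num_ineq hw hη0 hη1)] with k e1 e2 e3 e4 e5 e6 e7
  exact ⟨by linarith, by linarith, by linarith, by linarith, by linarith,
    no_root hna hξ hD (h.good k) (by linarith), by linarith⟩

lemma Fam.approx (h : Fam ξ f w η P A B C S) (hna : NA (kabs Fq)) (hξ1 : kabs Fq ξ ≤ 1)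
    (hw : 25 ≤ w) (hη : η < w / 20) {x1 : ℝ} (hx1 : 1 ≤ x1) {k0 : ℕ}
    (hF : ∀ k, k0 ≤ k → Facts P A B C x1 k) :
    ∃ H0 : ℝ, ∀ Q : Polynomial (Polynomial Fq), Q ≠ 0 → Q.natDegree ≤ 2 → H0 < Hpoly Fq Q →
      kabs Fq (evalK Fq Q ξ) ≤ Hpoly Fq Q ^ (-x1) →
      ∃ k, k0 ≤ k ∧ (P k).coeff 2 * Q.coeff 1 = Q.coeff 2 * (P k).coeff 1 ∧
        (P k).coeff 2 * Q.coeff 0 = Q.coeff 2 * (P k).coeff 0 := by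
  have hQ1 := card_gt (Fq := Fq)
  have hQ : (0 : ℝ) < Fintype.card Fq := by linarith
  refine ⟨(Fintype.card Fq : ℝ) ^ (-(A k0 + C k0) / 2), ?_⟩
  intro Q hQ0 hdeg hH hx
  have h1H := one_le_Hpoly hQ0
  obtain ⟨t, ht⟩ : ∃ t : ℝ, Hpoly Fq Q = (Fintype.card Fq : ℝ) ^ t :=
    ⟨Real.logb (Fintype.card Fq) (Hpoly Fq Q),
      (Real.rpow_logb hQ hQ1.ne' (by linarith)).symm⟩
  have ht0 : 0 ≤ t := by
    rw [ht, ← Real.rpow_zero (Fintype.card Fq : ℝ)] at h1H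
    exact (Real.rpow_le_rpow_left_iff hQ1).1 h1H
  have htk : -(A k0 + C k0) / 2 < t := by
    rw [ht] at hH; exact (Real.rpow_lt_rpow_left_iff hQ1).1 hH
  obtain ⟨k1, hk1⟩ := eventually_atTop.1 (h.ev 1 0 1 (2 * t) (by linarith))
  have hex : ∃ k, 2 * t + A (k0 + k) + C (k0 + k) < 0 :=
    ⟨k1, by have := hk1 (k0 + k1) (by omega); linarith⟩
  classical
  set k := Nat.find hex with hk
  have hks := Nat.find_spec hex
  rw [← hk] at hks
  have hk0 : k ≠ 0 := by
    intro h0; rw [h0, add_zero] at hks; linarith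
  obtain ⟨m, hm⟩ : ∃ m, k = m + 1 := ⟨k - 1, by omega⟩
  have hmin := Nat.find_min hex (m := m) (by rw [← hk]; omega)
  push Not at hmin
  rw [hm] at hks
  have F0 := hF (k0 + m) (by omega)
  have F1 := hF (k0 + (m + 1)) (by omega)
  refine ⟨k0 + (m + 1), by omega, ?_⟩
  refine proportional hna hξ1 (h.good _) F1.no hdeg ht (x := x1) ?_ F1.B0 F1.BA F1.CA ht0 hks ?_
  · refine hx.trans (le_of_eq ?_)
    rw [ht, ← Real.rpow_mul hQ.le]; congr 1; ring
  · refine lt_of_lt_of_le F0.nxt ?_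
    exact mul_le_mul_of_nonneg_left (by linarith) (by linarith)

lemma height_le_of_prop (hna : NA (kabs Fq)) (hξ1 : kabs Fq ξ ≤ 1)
    {P' Q : Polynomial (Polynomial Fq)} {A B C : ℝ} (hg : Good ξ f P' A B C) (hBA : B ≤ A)
    (hCA : C ≤ A) (hdeg : Q.natDegree ≤ 2)
    (h1 : P'.coeff 2 * Q.coeff 1 = Q.coeff 2 * P'.coeff 1)
    (h0 : P'.coeff 2 * Q.coeff 0 = Q.coeff 2 * P'.coeff 0) :
    Hpoly Fq Q ≤ kabs Fq (polyToK Fq (Q.coeff 2)) := by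
  have hQ1 := card_gt (Fq := Fq)
  have hQ : (0 : ℝ) < Fintype.card Fq := by linarith
  have hH := hg.height_le hna hξ1 hBA hCA
  have key : ∀ i, P'.coeff 2 * Q.coeff i = Q.coeff 2 * P'.coeff i →
      kabs Fq (polyToK Fq (Q.coeff i)) ≤ kabs Fq (polyToK Fq (Q.coeff 2)) := by
    intro i hi
    have e := congrArg (fun z => kabs Fq (polyToK Fq z)) hi
    simp only [map_mul, hna.map_mul, hg.hA] at e
    have l := le_Hpoly P' i
    rw [hH] at l
    have hp := Real.rpow_pos_of_pos hQ A
    have : (Fintype.card Fq : ℝ) ^ A * kabs Fq (polyToK Fq (Q.coeff i)) ≤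
        (Fintype.card Fq : ℝ) ^ A * kabs Fq (polyToK Fq (Q.coeff 2)) := by
      rw [e, mul_comm]
      exact mul_le_mul_of_nonneg_right l (hna.nonneg _)
    exact le_of_mul_le_mul_left this hp
  exact Hpoly_le_two hdeg (key 0 h0) (key 1 h1) le_rfl (hna.nonneg _)

lemma inf_of_small {X : Type} {Z : Set X} (g : X → ℝ) (hpos : ∀ x ∈ Z, 0 < g x)
    (hsm : ∀ ε : ℝ, 0 < ε → ∃ x ∈ Z, g x < ε) : Z.Infinite := by
  intro hfin
  obtain ⟨x0, hx0, -⟩ := hsm 1 one_pos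
  obtain ⟨y, hy, hmin⟩ := Set.exists_min_image Z g hfin ⟨x0, hx0⟩
  obtain ⟨z, hz, hlt⟩ := hsm (g y) (hpos y hy)
  exact absurd (hmin z hz) (not_le.2 hlt)

lemma exists_rpow_lt (ε : ℝ) (hε : 0 < ε) : ∃ M : ℝ, (Fintype.card Fq : ℝ) ^ (-M) < ε := by
  have hQ1 := card_gt (Fq := Fq)
  have hQ : (0 : ℝ) < Fintype.card Fq := by linarith
  obtain ⟨n, hn⟩ := exists_pow_lt_of_lt_one hε (inv_lt_one_of_one_lt₀ hQ1)
  refine ⟨n, ?_⟩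
  rwa [Real.rpow_neg hQ.le, Real.rpow_natCast, ← inv_pow]

lemma Fam.lower (h : Fam ξ f w η P A B C S) (hna : NA (kabs Fq)) (hξ1 : kabs Fq ξ ≤ 1)
    (hw : 25 ≤ w) (hη : η < w / 20) (hη0 : 0 < η) {x1 : ℝ}
    (hF : ∀ᶠ k in atTop, Facts P A B C x1 k) {y : ℝ} (hy : y < (2 * w - η) / (2 + η)) :
    {Q : Polynomial (Polynomial Fq) | Q.natDegree ≤ 2 ∧ 0 < kabs Fq (evalK Fq Q ξ) ∧
      kabs Fq (evalK Fq Q ξ) ≤ Hpoly Fq Q ^ (-y)}.Infinite := by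
  have hQ1 := card_gt (Fq := Fq)
  have hQ : (0 : ℝ) < Fintype.card Fq := by linarith
  rw [lt_div_iff₀ (by linarith)] at hy
  refine inf_of_small (fun Q => kabs Fq (evalK Fq Q ξ)) (fun Q hQ => hQ.2.1) ?_
  intro ε hε
  obtain ⟨M, hM⟩ := exists_rpow_lt (Fq := Fq) ε hε
  obtain ⟨k, F, e1, e2⟩ := (hF.and ((h.ev y 0 1 0 (by linarith)).and
    (h.ev 0 0 1 M (by linarith)))).exists
  have hg := h.good k
  refine ⟨P k, ⟨hg.deg, ?_, ?_⟩, ?_⟩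
  · rw [hg.hC]; positivity
  · rw [hg.hC, hg.height_le hna hξ1 F.BA F.CA, ← Real.rpow_mul hQ.le]
    exact Real.rpow_le_rpow_of_exponent_le hQ1.le (by linarith)
  · change kabs Fq (evalK Fq (P k) ξ) < ε
    rw [hg.hC]
    exact lt_of_le_of_lt (Real.rpow_le_rpow_of_exponent_le hQ1.le (by linarith)) hM

lemma Fam.lower_star {v : L Fq → ℝ} (hv : IsAbsExt Fq v) (h : Fam ξ f w η P A B C S)
    (hna : NA (kabs Fq)) (hξ1 : kabs Fq ξ ≤ 1)
    (hw : 25 ≤ w) (hη : η < w / 20) (hη0 : 0 < η) {x1 : ℝ}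
    (hF : ∀ᶠ k in atTop, Facts P A B C x1 k) {y : ℝ} (hy0 : 0 ≤ y)
    (hy : y < (2 * w - 2 - η) / (2 + η)) :
    {α : L Fq | IsAlgElem Fq α ∧ degAlg Fq α ≤ 2 ∧ 0 < v (toL Fq ξ - α) ∧
      v (toL Fq ξ - α) ≤ heightAlg Fq α ^ (-y - 1)}.Infinite := by
  have hQ1 := card_gt (Fq := Fq)
  have hQ : (0 : ℝ) < Fintype.card Fq := by linarith
  rw [lt_div_iff₀ (by linarith)] at hy
  refine inf_of_small (fun α => v (toL Fq ξ - α)) (fun Q hQ => hQ.2.2.1) ?_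
  intro ε hε
  obtain ⟨M, hM⟩ := exists_rpow_lt (Fq := Fq) ε hε
  obtain ⟨k, F, e1, e2⟩ := (hF.and ((h.ev (y + 1) (-1) 1 0 (by linarith)).and
    (h.ev 0 (-1) 1 M (by linarith)))).exists
  have hg := h.good k
  obtain ⟨α, hα, hvα⟩ := hg.root_ex hv F.N
  obtain ⟨ha, hd, hh1, hh⟩ := root_alg hna hg.deg (hg.ne hna) F.no hα
  rw [hg.height_le hna hξ1 F.BA F.CA] at hh
  refine ⟨α, ⟨ha, hd, ?_, ?_⟩, ?_⟩
  · rw [hvα]; positivity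
  · rw [hvα]
    have : ((Fintype.card Fq : ℝ) ^ A k) ^ (-y - 1) ≤ heightAlg Fq α ^ (-y - 1) :=
      Real.rpow_le_rpow_of_nonpos (by linarith) hh (by linarith)
    refine le_trans ?_ this
    rw [← Real.rpow_mul hQ.le]
    exact Real.rpow_le_rpow_of_exponent_le hQ1.le (by linarith)
  · change v (toL Fq ξ - α) < ε
    rw [hvα]
    exact lt_of_le_of_lt (Real.rpow_le_rpow_of_exponent_le hQ1.le (by linarith)) hM

lemma Fam.upper (h : Fam ξ f w η P A B C S) (hf : f ≠ 0) (hna : NA (kabs Fq))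
    (hξ1 : kabs Fq ξ ≤ 1)
    (hw : 25 ≤ w) (hη : η < w / 20) (hη0 : 0 < η)
    (hF : ∀ᶠ k in atTop, Facts P A B C ((2 * w - 2 - η) / (2 + η)) k) {y : ℝ}
    (hy : (2 * w - η) / (2 + η) < y) :
    {Q : Polynomial (Polynomial Fq) | Q.natDegree ≤ 2 ∧ 0 < kabs Fq (evalK Fq Q ξ) ∧
      kabs Fq (evalK Fq Q ξ) ≤ Hpoly Fq Q ^ (-y)}.Finite := by
  have hQ1 := card_gt (Fq := Fq)
  have hQ : (0 : ℝ) < Fintype.card Fq := by linarith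
  have hx1 : 1 ≤ (2 * w - 2 - η) / (2 + η) := by
    rw [le_div_iff₀ (by linarith)]; linarith
  have hxy : (2 * w - 2 - η) / (2 + η) ≤ y := by
    refine le_trans ?_ hy.le
    rw [div_le_div_iff_of_pos_right (by linarith)]; linarith
  have hy1 : 1 ≤ y := hx1.trans hxy
  rw [div_lt_iff₀ (by linarith)] at hy
  obtain ⟨k0, hk0⟩ := eventually_atTop.1 (hF.and
    (h.ev (-y) 0 (-1) ((1 + y) * f.natDegree) (by linarith)))
  obtain ⟨H0, hH0⟩ := h.approx hna hξ1 hw hη hx1 (fun k hk => (hk0 k hk).1)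
  refine (finite_height (Fq := Fq) H0 2).subset ?_
  rintro Q ⟨hdeg, hpos, hle⟩
  refine ⟨hdeg, ?_⟩
  by_contra hlt
  push Not at hlt
  have hQ0 : Q ≠ 0 := by
    rintro rfl
    simp [evalK, hna.zero] at hpos
  have h1H := one_le_Hpoly hQ0
  obtain ⟨k, hk, p1, p0⟩ := hH0 Q hQ0 hdeg hlt
    (hle.trans (Real.rpow_le_rpow_of_exponent_le h1H (by linarith)))
  obtain ⟨F, e⟩ := hk0 k hk
  have hg := h.good k
  obtain ⟨-, hge⟩ := prop_height hna hf hg hdeg hQ0 p1 p0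
  have hle2 := height_le_of_prop hna hξ1 hg F.BA F.CA hdeg p1 p0
  have hev := congrArg (kabs Fq) (prop_eval (ξ := ξ) hdeg hg.deg p1 p0)
  rw [hna.map_mul, hna.map_mul, hg.hA, hg.hC] at hev
  -- H * Q^C ≤ Q^A * H^(-y)
  have i1 : Hpoly Fq Q * (Fintype.card Fq : ℝ) ^ C k ≤
      (Fintype.card Fq : ℝ) ^ A k * Hpoly Fq Q ^ (-y) :=
    calc _ ≤ kabs Fq (polyToK Fq (Q.coeff 2)) * (Fintype.card Fq : ℝ) ^ C k := by gcongr
      _ = _ := hev.symm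
      _ ≤ _ := by gcongr
  have i2 : Hpoly Fq Q ^ (1 + y) * (Fintype.card Fq : ℝ) ^ C k ≤ (Fintype.card Fq : ℝ) ^ A k := by
    have hHp : 0 < Hpoly Fq Q := by linarith
    have : Hpoly Fq Q ^ y * (Hpoly Fq Q * (Fintype.card Fq : ℝ) ^ C k) ≤
        Hpoly Fq Q ^ y * ((Fintype.card Fq : ℝ) ^ A k * Hpoly Fq Q ^ (-y)) := by gcongr
    rw [Real.rpow_add hHp, Real.rpow_one]
    refine (le_of_eq (by ring)).trans (this.trans (le_of_eq ?_))
    rw [Real.rpow_neg hHp.le]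
    have : Hpoly Fq Q ^ y ≠ 0 := (Real.rpow_pos_of_pos hHp y).ne'
    field_simp
  have i3 : ((Fintype.card Fq : ℝ) ^ (A k - f.natDegree)) ^ (1 + y) ≤ Hpoly Fq Q ^ (1 + y) :=
    Real.rpow_le_rpow (by positivity) hge (by linarith)
  have i4 : ((Fintype.card Fq : ℝ) ^ (A k - f.natDegree)) ^ (1 + y) *
      (Fintype.card Fq : ℝ) ^ C k ≤ (Fintype.card Fq : ℝ) ^ A k :=
    le_trans (by gcongr) i2
  rw [← Real.rpow_mul hQ.le, ← Real.rpow_add hQ] at i4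
  have i5 := (Real.rpow_le_rpow_left_iff hQ1).1 i4
  linarith

lemma Fam.upper_star {v : L Fq → ℝ} (hv : IsAbsExt Fq v) (h : Fam ξ f w η P A B C S)
    (hf : f ≠ 0) (hna : NA (kabs Fq)) (hξ1 : kabs Fq ξ ≤ 1)
    (hw : 25 ≤ w) (hη : η < w / 20) (hη0 : 0 < η)
    (hF : ∀ᶠ k in atTop, Facts P A B C ((2 * w - 2 - η) / (2 + η)) k) {y : ℝ}
    (hy : (2 * w - 2 - η) / (2 + η) < y) :
    {α : L Fq | IsAlgElem Fq α ∧ degAlg Fq α ≤ 2 ∧ 0 < v (toL Fq ξ - α) ∧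
      v (toL Fq ξ - α) ≤ heightAlg Fq α ^ (-y - 1)}.Finite := by
  have hQ1 := card_gt (Fq := Fq)
  have hQ : (0 : ℝ) < Fintype.card Fq := by linarith
  have hx1 : 1 ≤ (2 * w - 2 - η) / (2 + η) := by
    rw [le_div_iff₀ (by linarith)]; linarith
  have hxy : (2 * w - 2 - η) / (2 + η) ≤ y := hy.le
  have hy1 : 1 ≤ y := hx1.trans hxy
  rw [div_lt_iff₀ (by linarith)] at hy
  obtain ⟨k0, hk0⟩ := eventually_atTop.1 (hF.and
    (h.ev (-(1 + y)) 1 (-1) ((1 + y) * f.natDegree) (by linarith)))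
  obtain ⟨H0, hH0⟩ := h.approx hna hξ1 hw hη hx1 (fun k hk => (hk0 k hk).1)
  refine (finite_roots _ (finite_height (Fq := Fq) H0 2)).subset ?_
  rintro α ⟨halg, hdeg, hpos, hle⟩
  refine ⟨halg, hdeg, ?_⟩
  by_contra hlt
  push Not at hlt
  rw [heightAlg] at hle
  rw [degAlg] at hdeg
  have hs := minPoly_spec halg
  set Q := minPolyPrim Fq α
  have hQ0 : Q ≠ 0 := hs.2.1.ne_zero
  have h1H := one_le_Hpoly hQ0
  have hHp : 0 < Hpoly Fq Q := by linarith
  have hroot := hs.2.2.2.2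
  have hv1 : v (toL Fq ξ - α) ≤ 1 :=
    hle.trans (Real.rpow_le_one_of_one_le_of_nonpos h1H (by linarith))
  have hev := eval_le_of_root hv hξ1 hdeg hroot hv1
  have hev2 : kabs Fq (evalK Fq Q ξ) ≤ Hpoly Fq Q ^ (-y) := by
    refine hev.trans ((mul_le_mul_of_nonneg_left hle hHp.le).trans (le_of_eq ?_))
    conv_lhs => rw [← Real.rpow_one_add' hHp.le (by linarith)]
    congr 1; ring
  obtain ⟨k, hk, p1, p0⟩ := hH0 Q hQ0 hdeg hlt
    (hev2.trans (Real.rpow_le_rpow_of_exponent_le h1H (by linarith)))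
  obtain ⟨F, e⟩ := hk0 k hk
  have hg := h.good k
  obtain ⟨h2, hge⟩ := prop_height hna hf hg hdeg hQ0 p1 p0
  have hr := prop_evalL (α := α) hdeg hg.deg p1 p0
  rw [hroot, mul_zero] at hr
  have hr2 : evalL Fq (P k) α = 0 := by
    rcases mul_eq_zero.1 hr.symm with h3 | h3
    · exfalso
      have : toL Fq (polyToK Fq (Q.coeff 2)) = toL Fq 0 := by rw [h3, map_zero]
      exact polyToK_ne h2 (toL_inj this)
    · exact h3
  have i1 := hg.root_ge hv F.N hr2
  have i3 : Hpoly Fq Q ^ (-y - 1) ≤ ((Fintype.card Fq : ℝ) ^ (A k - f.natDegree)) ^ (-y - 1) :=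
    Real.rpow_le_rpow_of_nonpos (by positivity) hge (by linarith)
  have i4 := i1.trans (hle.trans i3)
  rw [← Real.rpow_mul hQ.le] at i4
  have i5 := (Real.rpow_le_rpow_left_iff hQ1).1 i4
  linarith

lemma sSup_eq_of {p : ℝ → Prop} {t : ℝ} (ht : 0 < t) (h1 : ∀ y, t < y → ¬ p y)
    (h2 : ∀ y, 0 ≤ y → y < t → p y) :
    sSup {x : EReal | ∃ y : ℝ, x = (y : EReal) ∧ p y} = (t : EReal) := by
  apply le_antisymm
  · apply sSup_le
    rintro x ⟨y, rfl, hy⟩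
    by_contra hlt
    push Not at hlt
    exact h1 y (EReal.coe_lt_coe_iff.1 hlt) hy
  · apply le_of_forall_lt
    intro z hz
    obtain ⟨y, hzy, hyt⟩ := EReal.lt_iff_exists_real_btwn.1 hz
    have hyt := EReal.coe_lt_coe_iff.1 hyt
    refine lt_of_lt_of_le hzy (le_trans ?_ (le_sSup ⟨max y 0, rfl, h2 _ (le_max_right _ _)
      (max_lt hyt ht)⟩))
    exact EReal.coe_le_coe_iff.2 (le_max_left _ _)

end final

theorem stmt1 (Fq : Type) [Field Fq] [Fintype Fq]
    (v : L Fq → ℝ) (hv : IsAbsExt Fq v) (w η : ℝ)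
    (hw : 25 ≤ w) (hη0 : 0 < η) (hη1 : η < Real.sqrt w / 4)
    (b c d : Polynomial Fq) (hbc : b ≠ c) (hbd : b ≠ d) (hcd : c ≠ d)
    (hb : 1 ≤ b.natDegree) (hc : 1 ≤ c.natDegree) (hd : 1 ≤ d.natDegree)
    (mi : ℕ → ℤ)
    (hmi : ∀ i : ℕ, 1 ≤ i →
      mi i = ⌊(((⌊w ^ (i + 1)⌋ - ⌊w ^ i - 1⌋ : ℤ)) : ℝ) / ((⌊η * w ^ i⌋ : ℤ) : ℝ)⌋)
    (a : ℕ → Polynomial Fq) (ha0 : a 0 = 0)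
    (hac : ∀ n : ℕ, 1 ≤ n → (∃ i : ℕ, (n : ℤ) = ⌊w ^ i⌋) → a n = c)
    (had : ∀ n : ℕ, 1 ≤ n → (¬ ∃ i : ℕ, (n : ℤ) = ⌊w ^ i⌋) →
      (∃ j : ℕ, 1 ≤ j ∧ ∃ m : ℤ, 1 ≤ m ∧ m ≤ mi j ∧ (n : ℤ) = ⌊w ^ j⌋ + m * ⌊η * w ^ j⌋) →
      a n = d)
    (hab : ∀ n : ℕ, 1 ≤ n → (¬ ∃ i : ℕ, (n : ℤ) = ⌊w ^ i⌋) →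
      (¬ ∃ j : ℕ, 1 ≤ j ∧ ∃ m : ℤ, 1 ≤ m ∧ m ≤ mi j ∧ (n : ℤ) = ⌊w ^ j⌋ + m * ⌊η * w ^ j⌋) →
      a n = b)
    (ξ : K Fq) (hξ : IsCFOf Fq ξ a) :
    wStarExp Fq v 2 ξ = (((2 * w - 2 - η) / (2 + η) : ℝ) : EReal) ∧
    wExp Fq 2 ξ = (((2 * w - η) / (2 + η) : ℝ) : EReal) ∧
    wExp Fq 2 ξ - wStarExp Fq v 2 ξ = ((2 / (2 + η) : ℝ) : EReal) := by
  have hna := hv.nak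
  have hD : ∀ n, (a n).natDegree ≤ b.natDegree + c.natDegree + d.natDegree := by
    intro n
    rcases Nat.eq_zero_or_pos n with rfl | hn
    · simp [ha0]
    · by_cases h1 : ∃ i : ℕ, (n : ℤ) = ⌊w ^ i⌋
      · rw [hac n hn h1]; omega
      · by_cases h2 : ∃ j : ℕ, 1 ≤ j ∧ ∃ m : ℤ, 1 ≤ m ∧ m ≤ mi j ∧
            (n : ℤ) = ⌊w ^ j⌋ + m * ⌊η * w ^ j⌋
        · rw [had n hn h1 h2]; omega
        · rw [hab n hn h1 h2]; omega
  have hξ1 : kabs Fq ξ ≤ 1 := by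
    have h1 := kabs_D hna hξ 1
    have h2 : DD a ξ 1 = ξ := by simp [DD, qSeq, pSeq, ha0]
    rw [h2] at h1
    rw [h1]
    apply Real.rpow_le_one_of_one_le_of_nonpos (card_gt (Fq := Fq)).le
    simp
  obtain ⟨P, A, B, C, S, h⟩ := fam_of_family hw hb (family hna w η hw hη0 hη1 b c d hbc hbd hcd
    mi hmi a hac had hab hD (by omega) ξ hξ)
  have hη := eta_lt hw hη1
  have hF := h.facts hna hξ (fun n _ => hD n) hw hη0 hη1
  have hf : b - d ≠ 0 := sub_ne_zero.2 hbd
  have hstar : wStarExp Fq v 2 ξ = (((2 * w - 2 - η) / (2 + η) : ℝ) : EReal) := by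
    unfold wStarExp
    exact sSup_eq_of (div_pos (by linarith) (by linarith))
      (fun y hy hinf => hinf (h.upper_star hv hf hna hξ1 hw hη hη0 hF hy))
      (fun y h0 hy => h.lower_star hv hna hξ1 hw hη hη0 hF h0 hy)
  have hwe : wExp Fq 2 ξ = (((2 * w - η) / (2 + η) : ℝ) : EReal) := by
    unfold wExp
    exact sSup_eq_of (div_pos (by linarith) (by linarith))
      (fun y hy hinf => hinf (h.upper hf hna hξ1 hw hη hη0 hF hy))
      (fun y _ hy => h.lower hna hξ1 hw hη hη0 hF hy)
  refine ⟨hstar, hwe, ?_⟩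
  rw [hstar, hwe, ← EReal.coe_sub]
  congr 1
  have : 2 + η ≠ 0 := by linarith
  field_simp
  ring


end Ooto
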